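/- arXiv:2006.15200 — 2 statements merged into one kernel-verified Lean document; each statement's English description precedes it below -/
import Mathlib

section
/- Let ξ(x) be any real-valued function that tends to infinity as x → ∞, and for a prime p let L(p) denote the maximum of the multiplicative orders modulo p of the integers 1, 2, 3, …, ⌊ξ(p)⌋ (taken over those not divisible by p). Then for each fixed ε > 0, as x → ∞, the number of primes p ≤ x with L(p) ≤ p^{1−ε} is o(x/log x). -/
open Filter Asymptotics
open Finset

/-!
Fix `δ > 0`, let `N ≥ 1 / δ` and let `q₁, …, q_N` be the first `N` primes.  The vector
`(q₁, …, q_N)` of residues modulo `p` has an order `m`, which divides `p - 1`.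

* `m > p ^ (1 - δ)` for almost all `p`.  Otherwise the products `∏ qᵢ ^ eᵢ` with
  `eᵢ ≤ T ≈ p ^ ((1 - δ) / N)` lie among the at most `m` solutions of `z ^ m = 1` modulo `p`, so two
  of them agree and `p` divides a nonzero integer from a short list of numbers with few prime
  factors.
* The `N`-smooth part of `p - 1` is at most `p ^ δ` for almost all `p`.
* Modulo `p`, the numbers `n = ∏ qᵢ ^ eᵢ` with `0 ≤ eᵢ < N` satisfy `n ^ m = 1`.  For a prime
  `l ≥ N` dividing `m`, the relation `n ^ (m / l) = 1` holds for at most a proportion `1 / N` of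
  them, so averaging `log (m / ord n)` over `e` yields an `n` whose order falls short of `m` by at
  most a factor `p ^ (1 / N)` times the smooth part.

Hence some `n`, bounded in terms of `δ` alone, has order greater than `p ^ (1 - 3 δ)`.
-/

section SmoothPart

/-- The `N`-smooth part of `n`: its largest divisor (for `n ≠ 0`) all of whose prime factors are
less than `N`. -/
def smoothPart (N n : ℕ) : ℕ := ∏ l ∈ N.primesBelow, ordProj[l] n

lemma smoothPart_pos (N n : ℕ) : 0 < smoothPart N n :=
  prod_pos fun _ hl ↦ pow_pos (Nat.prime_of_mem_primesBelow hl).pos _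

lemma smoothPart_dvd_smoothPart (N : ℕ) {m n : ℕ} (hn : n ≠ 0) (hmn : m ∣ n) :
    smoothPart N m ∣ smoothPart N n :=
  prod_dvd_prod_of_dvd _ _ fun l _ ↦ Nat.ordProj_dvd_ordProj_of_dvd hn hmn l

lemma prod_ordProj_lt_le_smoothPart (N n : ℕ) :
    ∏ l ∈ n.primeFactors, (if l < N then ordProj[l] n else 1) ≤ smoothPart N n := by
  rw [← prod_filter]
  refine prod_le_prod_of_subset_of_one_le' (fun l hl ↦ ?_) fun l _ _ ↦ Nat.ordProj_pos n l
  obtain ⟨hln, hlN⟩ := mem_filter.1 hl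
  exact Nat.mem_primesBelow.2 ⟨hlN, Nat.prime_of_mem_primeFactors hln⟩

lemma card_primesBelow_le (N : ℕ) : #N.primesBelow ≤ N :=
  (card_filter_le _ _).trans_eq (card_range N)

lemma exists_lt_ordProj_of_pow_lt_smoothPart {N n : ℕ} {y : ℝ} (hy : 1 ≤ y)
    (h : y ^ N < smoothPart N n) : ∃ l ∈ N.primesBelow, y < (ordProj[l] n : ℕ) := by
  contrapose! h
  calc (smoothPart N n : ℝ) = ∏ l ∈ N.primesBelow, ((ordProj[l] n : ℕ) : ℝ) := Nat.cast_prod _ _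
    _ ≤ y ^ #N.primesBelow := (prod_le_prod (fun l _ ↦ Nat.cast_nonneg _) h).trans_eq (prod_const y)
    _ ≤ y ^ N := pow_le_pow_right₀ hy (card_primesBelow_le N)

lemma card_filter_lt_ordProj_le {l : ℕ} (hl : l.Prime) {y : ℝ} (hy : 1 ≤ y) (X : ℕ) :
    (#{n ∈ Ioc 0 X | y < (ordProj[l] n : ℕ)} : ℝ) ≤ X / y := by
  have hl1 : (1 : ℝ) < l := mod_cast hl.one_lt
  obtain ⟨k, hky, hyk⟩ := exists_nat_pow_near hy hl1
  have hdvd : ∀ n : ℕ, y < (ordProj[l] n : ℕ) → l ^ (k + 1) ∣ n := fun n hn ↦ by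
    have hk : (l : ℝ) ^ k < (l : ℝ) ^ n.factorization l := hky.trans_lt (mod_cast hn)
    exact (pow_dvd_pow l ((pow_lt_pow_iff_right₀ hl1).1 hk)).trans (Nat.ordProj_dvd n l)
  calc (#{n ∈ Ioc 0 X | y < (ordProj[l] n : ℕ)} : ℝ)
      ≤ #{n ∈ Ioc 0 X | l ^ (k + 1) ∣ n} :=
        mod_cast card_le_card (monotone_filter_right _ fun n _ ↦ hdvd n)
    _ ≤ X / (l : ℝ) ^ (k + 1) := by
        rw [Nat.Ioc_filter_dvd_card_eq_div]
        exact mod_cast Nat.cast_div_le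
    _ ≤ X / y := by gcongr

lemma card_filter_pow_lt_smoothPart_le (N X : ℕ) {y : ℝ} (hy : 1 ≤ y) :
    (#{n ∈ Ioc 0 X | y ^ N < smoothPart N n} : ℝ) ≤ N * (X / y) := by
  have hsub : {n ∈ Ioc 0 X | y ^ N < smoothPart N n} ⊆
      N.primesBelow.biUnion fun l ↦ {n ∈ Ioc 0 X | y < (ordProj[l] n : ℕ)} := fun n hn ↦ by
    obtain ⟨hnX, hny⟩ := mem_filter.1 hn
    obtain ⟨l, hl, hly⟩ := exists_lt_ordProj_of_pow_lt_smoothPart hy hny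
    exact mem_biUnion.2 ⟨l, hl, mem_filter.2 ⟨hnX, hly⟩⟩
  calc (#{n ∈ Ioc 0 X | y ^ N < smoothPart N n} : ℝ)
      ≤ ∑ l ∈ N.primesBelow, (#{n ∈ Ioc 0 X | y < (ordProj[l] n : ℕ)} : ℝ) :=
        mod_cast (card_le_card hsub).trans card_biUnion_le
    _ ≤ #N.primesBelow • (X / y : ℝ) := sum_le_card_nsmul _ _ _ fun l hl ↦
        card_filter_lt_ordProj_le (Nat.prime_of_mem_primesBelow hl) hy X
    _ ≤ N * (X / y) := by
        rw [nsmul_eq_mul]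
        gcongr
        exact card_primesBelow_le N

end SmoothPart

section BoundedExponents

/-- Only the primes `l` with `g ^ (m / l) = 1` can divide the index `m / orderOf g`. -/
lemma div_orderOf_dvd {G : Type*} [Monoid G] [DecidableEq G] {g : G} {m : ℕ} (hm : m ≠ 0)
    (hgm : g ^ m = 1) :
    m / orderOf g ∣ ∏ l ∈ m.primeFactors with g ^ (m / l) = 1, ordProj[l] m := by
  set k := m / orderOf g
  have hkm : orderOf g * k = m := Nat.mul_div_cancel' (orderOf_dvd_of_pow_eq_one hgm)
  have hk_dvd : k ∣ m := Dvd.intro_left _ hkm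
  have hk0 : k ≠ 0 := ne_zero_of_dvd_ne_zero hm hk_dvd
  have hsub : k.primeFactors ⊆ {l ∈ m.primeFactors | g ^ (m / l) = 1} := fun l hl ↦ by
    refine mem_filter.2 ⟨Nat.primeFactors_mono hk_dvd hm hl, orderOf_dvd_iff_pow_eq_one.1 ?_⟩
    rw [← hkm, Nat.mul_div_assoc _ (Nat.dvd_of_mem_primeFactors hl)]
    exact dvd_mul_right _ _
  calc k = ∏ l ∈ k.primeFactors, ordProj[l] k := (Nat.prod_factorization_pow_eq_self hk0).symm
    _ ∣ ∏ l ∈ k.primeFactors, ordProj[l] m :=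
        prod_dvd_prod_of_dvd _ _ fun l _ ↦ Nat.ordProj_dvd_ordProj_of_dvd hm hk_dvd l
    _ ∣ _ := prod_dvd_prod_of_subset _ _ _ hsub

lemma prod_div_orderOf_le {G α : Type*} [Monoid G] [DecidableEq G] (s : Finset α) (h : α → G)
    {m : ℕ} (hm : m ≠ 0) (hhm : ∀ a ∈ s, h a ^ m = 1) :
    ∏ a ∈ s, m / orderOf (h a) ≤
      ∏ l ∈ m.primeFactors, (ordProj[l] m) ^ #{a ∈ s | h a ^ (m / l) = 1} := by
  calc ∏ a ∈ s, m / orderOf (h a)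
      ≤ ∏ a ∈ s, ∏ l ∈ m.primeFactors with h a ^ (m / l) = 1, ordProj[l] m :=
        prod_le_prod' fun a ha ↦ Nat.le_of_dvd
          (prod_pos fun l hl ↦ pow_pos (Nat.pos_of_mem_primeFactors (mem_filter.1 hl).1) _)
          (div_orderOf_dvd hm (hhm a ha))
    _ = ∏ l ∈ m.primeFactors, ∏ a ∈ s with h a ^ (m / l) = 1, ordProj[l] m :=
        prod_comm' fun a l ↦ by simp only [mem_filter]; tauto
    _ = _ := by simp only [prod_const]

variable {ι G : Type*} [Fintype ι] [CommGroup G]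

/-- Once the exponents other than `e i` are fixed, at most one value of `e i` is possible. -/
lemma card_filter_prod_pow_eq_one_mul_le [DecidableEq ι] [DecidableEq G] (x : ι → G) {N : ℕ} {i : ι}
    (hi : N ≤ orderOf (x i)) :
    #{e : ι → Fin N | ∏ j, x j ^ (e j : ℕ) = 1} * N ≤ N ^ Fintype.card ι := by
  set s : Finset (ι → Fin N) := {e | ∏ j, x j ^ (e j : ℕ) = 1}
  have hinj : Set.InjOn (fun z : (ι → Fin N) × Fin N ↦ Function.update z.1 i z.2)
      (s ×ˢ univ : Finset ((ι → Fin N) × Fin N)) := by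
    rintro ⟨e, c⟩ he ⟨e', c'⟩ he' heq
    have he1 := (mem_filter.1 (mem_product.1 he).1).2
    have he1' := (mem_filter.1 (mem_product.1 he').1).2
    have hc : c = c' := by simpa using congrFun heq i
    have hne : ∀ j ≠ i, e j = e' j := fun j hj ↦ by simpa [hj] using congrFun heq j
    have hrest : ∏ j ∈ univ.erase i, x j ^ (e j : ℕ) = ∏ j ∈ univ.erase i, x j ^ (e' j : ℕ) :=
      prod_congr rfl fun j hj ↦ by rw [hne j (ne_of_mem_erase hj)]
    rw [← mul_prod_erase _ _ (mem_univ i)] at he1 he1'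
    rw [hrest] at he1
    have hei : e i = e' i := Fin.ext <| pow_injOn_Iio_orderOf ((e i).isLt.trans_le hi)
      ((e' i).isLt.trans_le hi) (mul_right_cancel (he1.trans he1'.symm))
    have hee' : e = e' := funext fun j ↦ (eq_or_ne j i).elim (fun hj ↦ hj ▸ hei) (hne j)
    rw [hee', hc]
  simpa only [card_product, card_univ, Fintype.card_fun, Fintype.card_fin] using
    card_le_card_of_injOn (t := univ) _ (fun z _ ↦ mem_coe.2 (mem_univ _)) hinj

lemma prod_pow_pow_eq_one {g : ι → G} {n : ℕ} (hg : g ^ n = 1) (e : ι → ℕ) :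
    (∏ i, g i ^ e i) ^ n = 1 := by
  rw [← prod_pow]
  refine prod_eq_one fun i _ ↦ ?_
  rw [pow_right_comm, show g i ^ n = 1 from congrFun hg i, one_pow]

lemma card_filter_prod_pow_pow_eq_one_mul_le [DecidableEq ι] [DecidableEq G] {g : ι → G}
    (hg : orderOf g ≠ 0) {l N : ℕ} (hl : l ∈ (orderOf g).primeFactors) (hN : N ≤ l) :
    #{e : ι → Fin N | (∏ i, g i ^ (e i : ℕ)) ^ (orderOf g / l) = 1} * N ≤
      N ^ Fintype.card ι := by
  have : Fact l.Prime := ⟨Nat.prime_of_mem_primeFactors hl⟩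
  set x : ι → G := g ^ (orderOf g / l)
  have hx : orderOf x = l := orderOf_pow_orderOf_div hg (Nat.dvd_of_mem_primeFactors hl)
  have hx1 : x ≠ 1 := by
    rw [Ne, ← orderOf_eq_one_iff, hx]
    exact (Nat.prime_of_mem_primeFactors hl).ne_one
  obtain ⟨i, hi⟩ : ∃ i, x i ≠ 1 := Function.ne_iff.1 hx1
  have hxi : orderOf (x i) = l :=
    orderOf_eq_prime (congrFun (orderOf_dvd_iff_pow_eq_one.1 hx.dvd) i) hi
  have hpow : ∀ e : ι → Fin N,
      (∏ i, g i ^ (e i : ℕ)) ^ (orderOf g / l) = ∏ i, x i ^ (e i : ℕ) := fun e ↦ by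
    simp only [← prod_pow, x, Pi.pow_apply, pow_right_comm]
  simp only [hpow]
  exact card_filter_prod_pow_eq_one_mul_le x (hN.trans_eq hxi.symm)

/-- A prime factor `l ≥ N` of the order survives for all but a proportion `1 / N` of the
exponents, which costs a factor `orderOf g` in total; the smaller prime factors are given up. -/
lemma prod_div_orderOf_prod_pow_le [DecidableEq ι] {g : ι → G} (hg : orderOf g ≠ 0) (N : ℕ) :
    ∏ e : ι → Fin N, (orderOf g / orderOf (∏ i, g i ^ (e i : ℕ))) ^ N ≤
      (orderOf g * smoothPart N (orderOf g) ^ N) ^ N ^ Fintype.card ι := by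
  classical
  set m := orderOf g
  have hlocal : ∀ l ∈ m.primeFactors,
      ((ordProj[l] m) ^ #{e : ι → Fin N | (∏ i, g i ^ (e i : ℕ)) ^ (m / l) = 1}) ^ N ≤
        (ordProj[l] m * (if l < N then ordProj[l] m else 1) ^ N) ^ N ^ Fintype.card ι := by
    intro l hl
    have hpos : 0 < ordProj[l] m := Nat.ordProj_pos m l
    rw [← pow_mul (ordProj[l] m)]
    split_ifs with hlN
    · rw [← pow_succ', ← pow_mul _ (N + 1), mul_comm (N + 1)]
      refine Nat.pow_le_pow_right hpos (Nat.mul_le_mul ?_ N.le_succ)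
      simpa using card_filter_le (univ : Finset (ι → Fin N)) _
    · rw [one_pow, mul_one]
      exact Nat.pow_le_pow_right hpos
        (card_filter_prod_pow_pow_eq_one_mul_le hg hl (not_lt.1 hlN))
  calc ∏ e : ι → Fin N, (m / orderOf (∏ i, g i ^ (e i : ℕ))) ^ N
      ≤ ∏ l ∈ m.primeFactors,
          ((ordProj[l] m) ^ #{e : ι → Fin N | (∏ i, g i ^ (e i : ℕ)) ^ (m / l) = 1}) ^ N := by
        rw [prod_pow, prod_pow]
        exact Nat.pow_le_pow_left (prod_div_orderOf_le univ _ hg fun e _ ↦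
          prod_pow_pow_eq_one (pow_orderOf_eq_one g) _) N
    _ ≤ ∏ l ∈ m.primeFactors,
          (ordProj[l] m * (if l < N then ordProj[l] m else 1) ^ N) ^ N ^ Fintype.card ι :=
        prod_le_prod' hlocal
    _ = (m * (∏ l ∈ m.primeFactors, if l < N then ordProj[l] m else 1) ^ N) ^
          N ^ Fintype.card ι := by
        rw [prod_pow, prod_mul_distrib, prod_pow]
        congr 2
        exact Nat.prod_factorization_pow_eq_self hg
    _ ≤ (m * smoothPart N m ^ N) ^ N ^ Fintype.card ι := by
        gcongr
        exact prod_ordProj_lt_le_smoothPart N m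

lemma exists_orderOf_pow_le {g : ι → G} (hg : orderOf g ≠ 0) (N : ℕ) [NeZero N] :
    ∃ e : ι → Fin N, orderOf g ^ N ≤
      orderOf g * (orderOf (∏ i, g i ^ (e i : ℕ)) * smoothPart N (orderOf g)) ^ N := by
  classical
  set m := orderOf g
  by_contra! hlt
  have hk : ∀ e : ι → Fin N, m * smoothPart N m ^ N <
      (m / orderOf (∏ i, g i ^ (e i : ℕ))) ^ N := fun e ↦ by
    have hdvd : orderOf (∏ i, g i ^ (e i : ℕ)) ∣ m :=
      orderOf_dvd_of_pow_eq_one (prod_pow_pow_eq_one (pow_orderOf_eq_one g) _)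
    refine lt_of_mul_lt_mul_left' (a := orderOf (∏ i, g i ^ (e i : ℕ)) ^ N) ?_
    rw [← mul_pow, Nat.mul_div_cancel' hdvd, mul_left_comm, ← mul_pow]
    exact hlt e
  have hprod := prod_lt_prod_of_nonempty
    (fun e _ ↦ Nat.mul_pos (Nat.pos_of_ne_zero hg) (pow_pos (smoothPart_pos N m) N))
    (fun e _ ↦ hk e) univ_nonempty
  rw [prod_const, card_univ, Fintype.card_fun, Fintype.card_fin] at hprod
  exact hprod.not_ge (prod_div_orderOf_prod_pow_le hg N)

end BoundedExponents

section MultiplicativeRelations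

variable {ι : Type*}

lemma exists_units_eq_natCast {p : ℕ} {q : ι → ℕ} (hp : p.Prime) (hpq : ∀ i, ¬ p ∣ q i) :
    ∃ u : ι → (ZMod p)ˣ, (∀ i, (u i : ZMod p) = q i) ∧
      orderOf u = orderOf fun i ↦ (q i : ZMod p) := by
  refine ⟨fun i ↦ ZMod.unitOfCoprime (q i) ((hp.coprime_iff_not_dvd.2 (hpq i)).symm),
    fun i ↦ ZMod.coe_unitOfCoprime _ _, ?_⟩
  exact (orderOf_injective ((Units.coeHom (ZMod p)).compLeft ι)
    (Function.Injective.comp_left Units.val_injective) _).symm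

variable [Fintype ι]

lemma exists_prod_zpow_eq_one {G : Type*} [CommGroup G] [Finite G] [IsCyclic G] (u : ι → G)
    {T : ℕ} (hT : orderOf u < (T + 1) ^ Fintype.card ι) :
    ∃ f : ι → ℤ, f ≠ 0 ∧ (∀ i, |f i| ≤ T) ∧ ∏ i, u i ^ f i = 1 := by
  classical
  have := Fintype.ofFinite G
  have hcard : #{a : G | a ^ orderOf u = 1} < #(univ : Finset (ι → Fin (T + 1))) := by
    rw [card_univ, Fintype.card_fun, Fintype.card_fin]
    exact (IsCyclic.card_pow_eq_one_le (orderOf_pos u)).trans_lt hT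
  obtain ⟨a, -, b, -, hab, heq⟩ := exists_ne_map_eq_of_card_lt_of_maps_to hcard
    (f := fun e ↦ ∏ i, u i ^ (e i : ℕ)) fun e _ ↦
      mem_coe.2 (mem_filter.2 ⟨mem_univ _, prod_pow_pow_eq_one (pow_orderOf_eq_one u) _⟩)
  refine ⟨fun i ↦ (a i : ℤ) - (b i : ℤ), fun h ↦ hab (funext fun i ↦ Fin.ext ?_), fun i ↦ ?_, ?_⟩
  · exact_mod_cast sub_eq_zero.1 (congrFun h i)
  · dsimp only
    rw [abs_le]
    omega
  · simp only [zpow_sub, zpow_natCast, prod_mul_distrib, prod_inv_distrib]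
    exact mul_inv_eq_one.2 heq

/-- Multiplicative independence of natural numbers: distinct vectors of exponents give distinct
products. In particular none of the `q i` is `0` or `1`. -/
def MultiplicativelyIndependent (q : ι → ℕ) : Prop :=
  Function.Injective fun a : ι → ℕ ↦ ∏ i, q i ^ a i

lemma multiplicativelyIndependent_of_prime {q : ι → ℕ} (hq : ∀ i, (q i).Prime)
    (hinj : Function.Injective q) : MultiplicativelyIndependent q := by
  have hfactorization : ∀ (a : ι → ℕ) (j : ι), (∏ i, q i ^ a i).factorization (q j) = a j := by
    intro a j
    rw [Nat.factorization_prod fun i _ ↦ pow_ne_zero _ (hq i).ne_zero, sum_apply',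
      sum_eq_single_of_mem j (mem_univ j)]
    · simp [(hq j).factorization_self]
    · intro i _ hij
      simp [(hq i).factorization, hinj.ne hij]
  intro a b hab
  funext j
  rw [← hfactorization a j, ← hfactorization b j]
  exact congrArg (fun n ↦ n.factorization (q j)) hab

lemma MultiplicativelyIndependent.pos {q : ι → ℕ} (hq : MultiplicativelyIndependent q) (i : ι) :
    0 < q i := by
  by_contra! hi
  have hzero : ∀ k : ℕ, k ≠ 0 → ∏ j, q j ^ (fun _ ↦ k : ι → ℕ) j = 0 := fun k hk ↦
    prod_eq_zero (mem_univ i) (by rw [Nat.le_zero.1 hi, zero_pow hk])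
  have h12 := hq ((hzero 1 one_ne_zero).trans (hzero 2 two_ne_zero).symm)
  exact absurd (congrFun h12 i) (by norm_num)

/-- The numerator of `∏ i, q i ^ f i - 1`, not reduced to lowest terms. -/
def relationNumerator (q : ι → ℕ) (f : ι → ℤ) : ℤ :=
  ∏ i, (q i : ℤ) ^ (f i).toNat - ∏ i, (q i : ℤ) ^ (-f i).toNat

lemma relationNumerator_ne_zero {q : ι → ℕ} (hq : MultiplicativelyIndependent q) {f : ι → ℤ}
    (hf : f ≠ 0) : relationNumerator q f ≠ 0 := by
  contrapose! hf
  have hprod : ∏ i, q i ^ (f i).toNat = ∏ i, q i ^ (-f i).toNat := by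
    exact_mod_cast sub_eq_zero.1 hf
  funext i
  have hi : (f i).toNat = (-f i).toNat := congrFun (hq hprod) i
  rw [Pi.zero_apply]
  omega

lemma natAbs_relationNumerator_le {q : ι → ℕ} (hq : ∀ i, 0 < q i) {f : ι → ℤ} {T : ℕ}
    (hf : ∀ i, |f i| ≤ T) : (relationNumerator q f).natAbs ≤ (∏ i, q i) ^ T := by
  have hbound : ∀ a : ι → ℕ, (∀ i, a i ≤ T) → ∏ i, q i ^ a i ≤ (∏ i, q i) ^ T := fun a ha ↦ by
    rw [← prod_pow]
    exact prod_le_prod' fun i _ ↦ Nat.pow_le_pow_right (hq i) (ha i)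
  have hpos := hbound (fun i ↦ (f i).toNat) fun i ↦ by have := abs_le.1 (hf i); omega
  have hneg := hbound (fun i ↦ (-f i).toNat) fun i ↦ by have := abs_le.1 (hf i); omega
  have hcast : relationNumerator q f =
      ((∏ i, q i ^ (f i).toNat : ℕ) : ℤ) - ((∏ i, q i ^ (-f i).toNat : ℕ) : ℤ) := by
    push_cast [relationNumerator]
    rfl
  omega

lemma dvd_relationNumerator {n : ℕ} {q : ι → ℕ} {u : ι → (ZMod n)ˣ} (hu : ∀ i, (u i : ZMod n) = q i)
    {f : ι → ℤ} (hf : ∏ i, u i ^ f i = 1) : (n : ℤ) ∣ relationNumerator q f := by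
  have hunits : ∏ i, u i ^ (f i).toNat = ∏ i, u i ^ (-f i).toNat := by
    rw [← mul_inv_eq_one, ← prod_inv_distrib, ← prod_mul_distrib, ← hf]
    refine prod_congr rfl fun i _ ↦ ?_
    rw [← zpow_natCast, ← zpow_natCast, ← zpow_neg, ← zpow_add, ← sub_eq_add_neg,
      Int.toNat_sub_toNat_neg]
  rw [← ZMod.intCast_zmod_eq_zero_iff_dvd]
  simpa [relationNumerator, sub_eq_zero, hu] using congrArg Units.val hunits

lemma card_primeFactors_le_logb {n : ℕ} (hn : n ≠ 0) : (#n.primeFactors : ℝ) ≤ Real.logb 2 n := by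
  rw [Real.le_logb_iff_rpow_le one_lt_two (by positivity), Real.rpow_natCast]
  have hpow : 2 ^ #n.primeFactors ≤ n :=
    (pow_card_le_prod _ _ _ fun p hp ↦ (Nat.prime_of_mem_primeFactors hp).two_le).trans
      (Nat.le_of_dvd (Nat.pos_of_ne_zero hn) (Nat.prod_primeFactors_dvd n))
  exact_mod_cast hpow

lemma exists_dvd_relationNumerator {p : ℕ} {q : ι → ℕ} (hp : p.Prime) (hpq : ∀ i, ¬ p ∣ q i)
    {T : ℕ} (hT : orderOf (fun i ↦ (q i : ZMod p)) < (T + 1) ^ Fintype.card ι) :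
    ∃ f : ι → ℤ, f ≠ 0 ∧ (∀ i, |f i| ≤ T) ∧ (p : ℤ) ∣ relationNumerator q f := by
  have : Fact p.Prime := ⟨hp⟩
  obtain ⟨u, huq, hu⟩ := exists_units_eq_natCast hp hpq
  obtain ⟨f, hf, hfT, hrel⟩ := exists_prod_zpow_eq_one u (hu.trans_lt hT)
  exact ⟨f, hf, hfT, dvd_relationNumerator huq hrel⟩

lemma card_primeFactors_relationNumerator_le {q : ι → ℕ} (hq : MultiplicativelyIndependent q)
    {f : ι → ℤ} (hf : f ≠ 0) {T : ℕ} (hfT : ∀ i, |f i| ≤ T) :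
    (#(relationNumerator q f).natAbs.primeFactors : ℝ) ≤ T * Real.logb 2 (∏ i, q i : ℕ) := by
  have hne := Int.natAbs_ne_zero.2 (relationNumerator_ne_zero hq hf)
  have hle := natAbs_relationNumerator_le hq.pos hfT
  rw [← Real.logb_pow]
  exact (card_primeFactors_le_logb hne).trans
    (Real.logb_le_logb_of_le one_lt_two (by positivity) (mod_cast hle))

lemma card_primes_orderOf_lt_le {q : ι → ℕ} (hq : MultiplicativelyIndependent q) {T : ℕ}
    {P : Finset ℕ} (hP : ∀ p ∈ P, p.Prime ∧ (∀ i, ¬ p ∣ q i) ∧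
      orderOf (fun i ↦ (q i : ZMod p)) < (T + 1) ^ Fintype.card ι) :
    (#P : ℝ) ≤ (2 * T + 1) ^ Fintype.card ι * (T * Real.logb 2 (∏ i, q i : ℕ)) := by
  classical
  set box : Finset (ι → ℤ) := Fintype.piFinset fun _ ↦ Icc (-T : ℤ) T with hbox
  have mem_box : ∀ f : ι → ℤ, f ∈ box ↔ ∀ i, |f i| ≤ T := fun f ↦ by
    simp only [box, Fintype.mem_piFinset, mem_Icc, abs_le]
  have card_box : #box = (2 * T + 1) ^ Fintype.card ι := by
    rw [hbox, Fintype.card_piFinset, prod_const, card_univ, Int.card_Icc]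
    congr 1
    omega
  have hsub : P ⊆ {f ∈ box | f ≠ 0}.biUnion fun f ↦
      (relationNumerator q f).natAbs.primeFactors := fun p hpP ↦ by
    obtain ⟨hp, hpq, horder⟩ := hP p hpP
    obtain ⟨f, hf, hfT, hdvd⟩ := exists_dvd_relationNumerator hp hpq horder
    exact mem_biUnion.2 ⟨f, mem_filter.2 ⟨(mem_box f).2 hfT, hf⟩, Nat.mem_primeFactors.2
      ⟨hp, Int.natCast_dvd.1 hdvd, Int.natAbs_ne_zero.2 (relationNumerator_ne_zero hq hf)⟩⟩
  have hlog : 0 ≤ Real.logb 2 (∏ i, q i : ℕ) :=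
    Real.logb_nonneg one_lt_two (mod_cast prod_pos fun i _ ↦ hq.pos i)
  calc (#P : ℝ) ≤ ∑ f ∈ box with f ≠ 0, (#(relationNumerator q f).natAbs.primeFactors : ℝ) :=
        mod_cast (card_le_card hsub).trans card_biUnion_le
    _ ≤ #{f ∈ box | f ≠ 0} • (T * Real.logb 2 (∏ i, q i : ℕ)) :=
        sum_le_card_nsmul _ _ _ fun f hf ↦ card_primeFactors_relationNumerator_le hq
          (mem_filter.1 hf).2 ((mem_box f).1 (mem_filter.1 hf).1)
    _ ≤ (2 * T + 1) ^ Fintype.card ι * (T * Real.logb 2 (∏ i, q i : ℕ)) := by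
        rw [nsmul_eq_mul]
        gcongr
        exact mod_cast (card_filter_le _ _).trans_eq card_box

end MultiplicativeRelations

lemma exists_natCast_orderOf_pow_le {ι : Type*} [Fintype ι] {p : ℕ} (hp : p.Prime) {q : ι → ℕ}
    (hpq : ∀ i, ¬ p ∣ q i) (N : ℕ) [NeZero N] :
    ∃ n ≤ (∏ i, q i) ^ N, ¬ p ∣ n ∧ orderOf (fun i ↦ (q i : ZMod p)) ^ N ≤
      p * (orderOf (n : ZMod p) * smoothPart N (p - 1)) ^ N := by
  have : Fact p.Prime := ⟨hp⟩
  obtain ⟨u, huq, hu⟩ := exists_units_eq_natCast hp hpq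
  have hdvd : orderOf u ∣ p - 1 := orderOf_dvd_of_pow_eq_one <|
    funext fun i ↦ ZMod.units_pow_card_sub_one_eq_one p (u i)
  have hp1 : p - 1 ≠ 0 := (Nat.sub_pos_of_lt hp.one_lt).ne'
  have hsmooth : smoothPart N (orderOf u) ≤ smoothPart N (p - 1) :=
    Nat.le_of_dvd (smoothPart_pos N _) (smoothPart_dvd_smoothPart N hp1 hdvd)
  have horder : orderOf u ≤ p := (Nat.le_of_dvd (Nat.pos_of_ne_zero hp1) hdvd).trans (p.sub_le 1)
  obtain ⟨e, he⟩ := exists_orderOf_pow_le (orderOf_pos u).ne' N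
  have hcast : ((∏ i, u i ^ (e i : ℕ) : (ZMod p)ˣ) : ZMod p) = (∏ i, q i ^ (e i : ℕ) : ℕ) := by
    simp [huq]
  refine ⟨∏ i, q i ^ (e i : ℕ), ?_, ?_, ?_⟩
  · rw [← prod_pow]
    exact prod_le_prod' fun i _ ↦ Nat.pow_le_pow_right
      (Nat.pos_of_ne_zero fun h ↦ hpq i (by rw [h]; exact dvd_zero p)) (e i).isLt.le
  · rw [← ZMod.natCast_eq_zero_iff, ← hcast]
    exact Units.ne_zero _
  · rw [← hu, ← hcast, orderOf_units]
    exact he.trans (by gcongr)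

section AlmostAllPrimes

/-- The number of primes `p ≤ x` that belong to `s`. -/
noncomputable def primeCount (s : Set ℕ) (x : ℝ) : ℕ :=
  Nat.card {p : ℕ | p.Prime ∧ (p : ℝ) ≤ x ∧ p ∈ s}

lemma primeCount_le_card {s : Set ℕ} {x : ℝ} {t : Finset ℕ}
    (h : ∀ p : ℕ, p.Prime → (p : ℝ) ≤ x → p ∈ s → p ∈ t) : primeCount s x ≤ #t := by
  rw [← Set.ncard_coe_finset]
  exact Nat.card_mono t.finite_toSet fun p hp ↦ h p hp.1 hp.2.1 hp.2.2

lemma primeCount_mono {s t : Set ℕ} (hst : s ⊆ t) (x : ℝ) : primeCount s x ≤ primeCount t x :=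
  Nat.card_mono ((Set.finite_Iic ⌊x⌋₊).subset fun _ hp ↦ Nat.le_floor hp.2.1)
    fun _ hp ↦ ⟨hp.1, hp.2.1, hst hp.2.2⟩

lemma primeCount_union_le (s t : Set ℕ) (x : ℝ) :
    primeCount (s ∪ t) x ≤ primeCount s x + primeCount t x := by
  have hunion : {p : ℕ | p.Prime ∧ (p : ℝ) ≤ x ∧ p ∈ s ∪ t} =
      {p : ℕ | p.Prime ∧ (p : ℝ) ≤ x ∧ p ∈ s} ∪ {p : ℕ | p.Prime ∧ (p : ℝ) ≤ x ∧ p ∈ t} := by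
    simp only [Set.mem_union, and_or_left, Set.ofPred_or]
  rw [primeCount, hunion]
  exact Set.card_union_le _ _

lemma isBigO_rpow_one_sub {c d : ℝ} (hcd : c ≤ d) :
    (fun x : ℝ ↦ x ^ (1 - d)) =O[atTop] fun x : ℝ ↦ x ^ (1 - c) := by
  refine .of_norm_eventuallyLE ?_
  filter_upwards [eventually_ge_atTop 1] with x hx
  rw [Real.norm_of_nonneg (by positivity)]
  exact Real.rpow_le_rpow_of_exponent_le hx (sub_le_sub_left hcd 1)

/-- The filter of sets containing almost all primes, in the strong sense that the number of primes
`p ≤ x` outside the set is `O(x ^ (1 - c))` for some `c > 0`. -/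
def almostAllPrimes : Filter ℕ where
  sets := {s | ∃ c : ℝ, 0 < c ∧
    (fun x ↦ (primeCount sᶜ x : ℝ)) =O[atTop] fun x : ℝ ↦ x ^ (1 - c)}
  univ_sets := by
    refine ⟨1, one_pos, (isBigO_zero _ _).congr_left fun x ↦ ?_⟩
    simp [primeCount]
  sets_of_superset := by
    rintro s t ⟨c, hc, hs⟩ hst
    refine ⟨c, hc, (IsBigO.of_norm_le fun x ↦ ?_).trans hs⟩
    rw [Real.norm_natCast, Nat.cast_le]
    exact primeCount_mono (Set.compl_subset_compl.2 hst) x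
  inter_sets := by
    rintro s t ⟨c, hc, hs⟩ ⟨d, hd, ht⟩
    have hsum := (hs.trans (isBigO_rpow_one_sub (min_le_left c d))).add
      (ht.trans (isBigO_rpow_one_sub (min_le_right c d)))
    refine ⟨min c d, lt_min hc hd, (IsBigO.of_norm_le fun x ↦ ?_).trans hsum⟩
    rw [Real.norm_natCast, Set.compl_inter]
    exact_mod_cast primeCount_union_le sᶜ tᶜ x

variable {P : ℕ → Prop}

lemma eventually_almostAllPrimes_of_le {c C : ℝ} (hc : 0 < c)
    (h : ∀ x : ℝ, 1 ≤ x → (primeCount {p | ¬ P p} x : ℝ) ≤ C * x ^ (1 - c)) :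
    ∀ᶠ p in almostAllPrimes, P p := by
  refine ⟨c, hc, .of_bound C ?_⟩
  filter_upwards [eventually_ge_atTop 1] with x hx
  rw [Real.norm_natCast, Real.norm_of_nonneg (by positivity)]
  exact h x hx

lemma eventually_prime_almostAllPrimes : ∀ᶠ p in almostAllPrimes, p.Prime :=
  eventually_almostAllPrimes_of_le (c := 1) (C := 0) one_pos fun x _ ↦ by
    have hcard := primeCount_le_card (s := {p | ¬ p.Prime}) (x := x) (t := ∅)
      fun p hp _ hnp ↦ absurd hp hnp
    simpa using hcard

lemma almostAllPrimes_le_atTop : almostAllPrimes ≤ atTop := by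
  refine le_iInf fun a ↦ le_principal_iff.2 ?_
  refine eventually_almostAllPrimes_of_le (c := 1) (C := a) (P := (a ≤ ·)) one_pos fun x _ ↦ ?_
  have hcard := primeCount_le_card (s := {p | ¬ a ≤ p}) (x := x) (t := range a)
    fun p _ _ hp ↦ mem_range.2 (not_le.1 hp)
  simpa using hcard

lemma isLittleO_rpow_one_sub_div_log {c : ℝ} (hc : 0 < c) :
    (fun x : ℝ ↦ x ^ (1 - c)) =o[atTop] fun x ↦ x / Real.log x := by
  have h := (isBigO_refl (fun x : ℝ ↦ x ^ (1 - c) / Real.log x) atTop).mul_isLittleO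
    (isLittleO_log_rpow_atTop hc)
  refine h.congr' ?_ ?_ <;> filter_upwards [eventually_gt_atTop 1] with x hx
  · exact div_mul_cancel₀ _ (Real.log_pos hx).ne'
  · rw [div_mul_eq_mul_div, ← Real.rpow_add (one_pos.trans hx), sub_add_cancel, Real.rpow_one]

lemma isLittleO_primeCount_of_eventually (h : ∀ᶠ p in almostAllPrimes, P p) :
    (fun x ↦ (primeCount {p | ¬ P p} x : ℝ)) =o[atTop] fun x ↦ x / Real.log x := by
  obtain ⟨c, hc, hO⟩ := h
  exact hO.trans_isLittleO (isLittleO_rpow_one_sub_div_log hc)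

lemma primeCount_rpow_lt_smoothPart_le (N : ℕ) {δ x y z : ℝ} (hδ : 0 ≤ δ) (hx : 0 ≤ x)
    (hy : 1 ≤ y) (hz : 0 ≤ z) (hyz : y ^ N ≤ z ^ δ) :
    (primeCount {p | ¬ (smoothPart N (p - 1) : ℝ) ≤ (p : ℝ) ^ δ} x : ℝ) ≤ z + N * (x / y) := by
  set small : Finset ℕ := Ioc 0 ⌊z⌋₊
  set large : Finset ℕ := {n ∈ Ioc 0 ⌊x⌋₊ | y ^ N < smoothPart N n}
  have hcover : primeCount {p | ¬ (smoothPart N (p - 1) : ℝ) ≤ (p : ℝ) ^ δ} x ≤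
      #(small ∪ large.image (· + 1)) := by
    refine primeCount_le_card fun p hp hpx hpS ↦ mem_union.2 ?_
    rcases le_or_gt (p : ℝ) z with hle | hgt
    · exact .inl (mem_Ioc.2 ⟨hp.pos, Nat.le_floor hle⟩)
    · have hp1 : p - 1 ∈ Ioc 0 ⌊x⌋₊ :=
        mem_Ioc.2 ⟨Nat.sub_pos_of_lt hp.one_lt, (p.sub_le 1).trans (Nat.le_floor hpx)⟩
      have hpow : z ^ δ ≤ (p : ℝ) ^ δ := Real.rpow_le_rpow hz hgt.le hδ
      exact .inr (mem_image.2 ⟨p - 1,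
        mem_filter.2 ⟨hp1, (hyz.trans hpow).trans_lt (not_le.1 hpS)⟩,
        Nat.sub_add_cancel hp.one_le⟩)
  have hsmall : (#small : ℝ) ≤ z := by
    rw [Nat.card_Ioc, Nat.sub_zero]
    exact Nat.floor_le hz
  have hlarge : (#large : ℝ) ≤ N * (x / y) := by
    refine (card_filter_pow_lt_smoothPart_le N ⌊x⌋₊ hy).trans ?_
    gcongr
    exact Nat.floor_le hx
  calc (primeCount _ x : ℝ) ≤ #small + #large :=
        mod_cast hcover.trans ((card_union_le _ _).trans (Nat.add_le_add_left card_image_le _))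
    _ ≤ z + N * (x / y) := add_le_add hsmall hlarge

/-- The primes up to `√x` are negligible, and for the others `p ^ δ` is at least `x ^ (δ / 2)`. -/
lemma eventually_smoothPart_sub_one_le (N : ℕ) {δ : ℝ} (hδ : 0 < δ) :
    ∀ᶠ p : ℕ in almostAllPrimes, (smoothPart N (p - 1) : ℝ) ≤ (p : ℝ) ^ δ := by
  set d : ℝ := δ / (2 * (N + 1))
  have hd : 0 < d := by positivity
  refine eventually_almostAllPrimes_of_le (c := min (1 / 2) d) (C := 1 + N) (by positivity)
    fun x hx ↦ ?_
  have hx0 : 0 < x := one_pos.trans_le hx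
  have hyz : (x ^ d) ^ N ≤ (x ^ (1 / 2 : ℝ)) ^ δ := by
    rw [← Real.rpow_mul_natCast hx0.le, ← Real.rpow_mul hx0.le]
    refine Real.rpow_le_rpow_of_exponent_le hx ?_
    rw [div_mul_eq_mul_div, div_le_iff₀ (by positivity)]
    nlinarith
  calc (primeCount _ x : ℝ) ≤ x ^ (1 / 2 : ℝ) + N * (x / x ^ d) :=
        primeCount_rpow_lt_smoothPart_le N hδ.le hx0.le (Real.one_le_rpow hx hd.le)
          (by positivity) hyz
    _ = x ^ (1 - 1 / 2 : ℝ) + N * x ^ (1 - d) := by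
        rw [Real.rpow_sub hx0 1 d, Real.rpow_one, sub_half]
    _ ≤ x ^ (1 - min (1 / 2) d) + N * x ^ (1 - min (1 / 2) d) := by
        gcongr
        exacts [min_le_left _ _, min_le_right _ _]
    _ = (1 + N) * x ^ (1 - min (1 / 2) d) := by ring

variable {ι : Type*}

lemma eventually_not_dvd_almostAllPrimes [Finite ι] {q : ι → ℕ} (hq : ∀ i, 0 < q i) :
    ∀ᶠ p in almostAllPrimes, ∀ i, ¬ p ∣ q i :=
  eventually_all.2 fun i ↦ (eventually_gt_atTop (q i)).filter_mono almostAllPrimes_le_atTop |>.mono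
    fun _ hp ↦ Nat.not_dvd_of_pos_of_lt (hq i) hp

variable [Fintype ι]

lemma card_primes_orderOf_le_rpow_le {q : ι → ℕ} (hq : MultiplicativelyIndependent q) [Nonempty ι]
    {δ x : ℝ} (hδ : δ ≤ 1) (hx : 1 ≤ x) {P : Finset ℕ}
    (hP : ∀ p ∈ P, p.Prime ∧ (∀ i, ¬ p ∣ q i) ∧
      (orderOf (fun i ↦ (q i : ZMod p)) : ℝ) ≤ x ^ (1 - δ)) :
    (#P : ℝ) ≤ 3 ^ Fintype.card ι * Real.logb 2 (∏ i, q i : ℕ) *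
      x ^ (1 - (δ - (1 - δ) / Fintype.card ι)) := by
  set r := Fintype.card ι
  have hr : (r : ℝ) ≠ 0 := Nat.cast_ne_zero.2 Fintype.card_ne_zero
  have hx0 : 0 < x := one_pos.trans_le hx
  set y := x ^ ((1 - δ) / r) with hy
  have hy1 : 1 ≤ y := Real.one_le_rpow hx (div_nonneg (sub_nonneg.2 hδ) r.cast_nonneg)
  have hyr : y ^ r = x ^ (1 - δ) := by
    rw [hy, ← Real.rpow_mul_natCast hx0.le, div_mul_cancel₀ _ hr]
  have hfloor : (⌊y⌋₊ : ℝ) ≤ y := Nat.floor_le (one_pos.le.trans hy1)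
  have hlog : 0 ≤ Real.logb 2 (∏ i, q i : ℕ) :=
    Real.logb_nonneg one_lt_two (mod_cast prod_pos fun i _ ↦ hq.pos i)
  have hlt : ∀ p ∈ P, p.Prime ∧ (∀ i, ¬ p ∣ q i) ∧
      orderOf (fun i ↦ (q i : ZMod p)) < (⌊y⌋₊ + 1) ^ r := fun p hp ↦ by
    obtain ⟨hpp, hpq, horder⟩ := hP p hp
    have hpow : x ^ (1 - δ) < ((⌊y⌋₊ : ℝ) + 1) ^ r := by
      rw [← hyr]
      exact pow_lt_pow_left₀ (Nat.lt_floor_add_one y) (by positivity) Fintype.card_ne_zero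
    exact ⟨hpp, hpq, by exact_mod_cast horder.trans_lt hpow⟩
  calc (#P : ℝ) ≤ (2 * ⌊y⌋₊ + 1) ^ r * (⌊y⌋₊ * Real.logb 2 (∏ i, q i : ℕ)) :=
        card_primes_orderOf_lt_le hq hlt
    _ ≤ (3 * y) ^ r * (y * Real.logb 2 (∏ i, q i : ℕ)) := by
        gcongr
        linarith
    _ = 3 ^ r * Real.logb 2 (∏ i, q i : ℕ) * (x ^ (1 - δ) * x ^ ((1 - δ) / r)) := by
        rw [mul_pow, hyr]
        ring
    _ = _ := by
        rw [← Real.rpow_add hx0]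
        ring_nf

lemma eventually_rpow_lt_orderOf {q : ι → ℕ} (hq : MultiplicativelyIndependent q) {δ : ℝ}
    (hδ : δ ≤ 1) (hδι : 1 < δ * (Fintype.card ι + 1)) :
    ∀ᶠ p : ℕ in almostAllPrimes, (p : ℝ) ^ (1 - δ) < orderOf fun i ↦ (q i : ZMod p) := by
  have hcard : 0 < (Fintype.card ι : ℝ) := by
    by_contra! h
    nlinarith [(Fintype.card ι).cast_nonneg (α := ℝ)]
  have : Nonempty ι := Fintype.card_pos_iff.1 (Nat.cast_pos.1 hcard)
  have hc : 0 < δ - (1 - δ) / Fintype.card ι := by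
    rw [sub_pos, div_lt_iff₀ hcard]
    linarith
  have hnotdvd : ∀ᶠ p : ℕ in almostAllPrimes, (∀ i, ¬ p ∣ q i) →
      (p : ℝ) ^ (1 - δ) < orderOf fun i ↦ (q i : ZMod p) := by
    classical
    refine eventually_almostAllPrimes_of_le
      (C := 3 ^ Fintype.card ι * Real.logb 2 (∏ i, q i : ℕ)) hc fun x hx ↦ ?_
    set P : Finset ℕ := {p ∈ Iic ⌊x⌋₊ | p.Prime ∧ (∀ i, ¬ p ∣ q i) ∧
      (orderOf (fun i ↦ (q i : ZMod p)) : ℝ) ≤ x ^ (1 - δ)}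
    refine le_trans ?_ (card_primes_orderOf_le_rpow_le hq hδ hx (P := P)
      fun p hp ↦ (mem_filter.1 hp).2)
    refine mod_cast primeCount_le_card fun p hp hpx hpord ↦ ?_
    obtain ⟨hpq, hle⟩ := Classical.not_imp.1 hpord
    exact mem_filter.2 ⟨mem_Iic.2 (Nat.le_floor hpx), hp, hpq, (not_lt.1 hle).trans <|
      Real.rpow_le_rpow p.cast_nonneg hpx (sub_nonneg.2 hδ)⟩
  filter_upwards [hnotdvd, eventually_not_dvd_almostAllPrimes hq.pos] with p hp hpq using hp hpq

end AlmostAllPrimes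

lemma rpow_one_sub_three_mul_lt {p m o S δ : ℝ} {N : ℕ} (hp : 1 ≤ p) (ho : 0 ≤ o) (hS : 0 ≤ S)
    (hN : 1 ≤ δ * N) (hm : p ^ (1 - δ) < m) (hSδ : S ≤ p ^ δ) (h : m ^ N ≤ p * (o * S) ^ N) :
    p ^ (1 - 3 * δ) < o := by
  have hp0 : 0 < p := one_pos.trans_le hp
  have hN0 : N ≠ 0 := by
    rintro rfl
    norm_num at hN
  have hroot : p ≤ (p ^ δ) ^ N := by
    rw [← Real.rpow_mul_natCast hp0.le]
    exact Real.self_le_rpow_of_one_le hp hN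
  have hmo : m ≤ p ^ δ * (o * p ^ δ) := by
    refine le_of_pow_le_pow_left₀ hN0 (by positivity) (h.trans ?_)
    rw [mul_pow (p ^ δ)]
    gcongr
  refine lt_of_mul_lt_mul_left ?_ (by positivity : 0 ≤ p ^ δ * p ^ δ)
  calc p ^ δ * p ^ δ * p ^ (1 - 3 * δ) = p ^ (1 - δ) := by
        rw [← Real.rpow_add hp0, ← Real.rpow_add hp0]
        ring_nf
    _ < m := hm
    _ ≤ p ^ δ * p ^ δ * o := hmo.trans_eq (by ring)

lemma exists_forall_eventually_exists_rpow_lt_orderOf {ε : ℝ} (hε : 0 < ε) :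
    ∃ K : ℕ, ∀ᶠ p : ℕ in almostAllPrimes,
      ∃ n ≤ K, ¬ p ∣ n ∧ (p : ℝ) ^ (1 - ε) < orderOf (n : ZMod p) := by
  obtain ⟨δ, hδ0, hδ1, hδε⟩ : ∃ δ : ℝ, 0 < δ ∧ δ ≤ 1 ∧ 3 * δ ≤ ε :=
    ⟨min 1 (ε / 3), by positivity, min_le_left _ _, by linarith [min_le_right 1 (ε / 3)]⟩
  obtain ⟨N, hN⟩ : ∃ N : ℕ, 1 ≤ δ * N := (exists_nat_ge (1 / δ)).imp fun N hN ↦ by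
    rwa [div_le_iff₀' hδ0] at hN
  have : NeZero N := ⟨by rintro rfl; norm_num at hN⟩
  set q : Fin N → ℕ := fun i ↦ Nat.nth Nat.Prime i
  have hq : MultiplicativelyIndependent q :=
    multiplicativelyIndependent_of_prime (fun i ↦ Nat.prime_nth_prime i)
      ((Nat.nth_injective Nat.infinite_setOfPred_prime).comp Fin.val_injective)
  have hδN : 1 < δ * (Fintype.card (Fin N) + 1) := by
    rw [Fintype.card_fin]
    linarith
  refine ⟨(∏ i, q i) ^ N, ?_⟩
  filter_upwards [eventually_prime_almostAllPrimes, eventually_not_dvd_almostAllPrimes hq.pos,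
    eventually_smoothPart_sub_one_le N hδ0, eventually_rpow_lt_orderOf hq hδ1 hδN]
    with p hp hpq hsmooth horder
  obtain ⟨n, hnK, hpn, hn⟩ := exists_natCast_orderOf_pow_le hp hpq N
  have hp1 : (1 : ℝ) ≤ p := mod_cast hp.one_le
  refine ⟨n, hnK, hpn, ?_⟩
  calc (p : ℝ) ^ (1 - ε) ≤ (p : ℝ) ^ (1 - 3 * δ) :=
        Real.rpow_le_rpow_of_exponent_le hp1 (by linarith)
    _ < orderOf (n : ZMod p) := rpow_one_sub_three_mul_lt hp1 (Nat.cast_nonneg _)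
        (Nat.cast_nonneg _) hN horder hsmooth (mod_cast hn)

theorem stmt_4_general {ε : ℝ} (hε : 0 < ε) : ∃ K : ℝ, ∀ ξ : ℝ → ℝ, (∀ᶠ x in atTop, K ≤ ξ x) →
    ∀ᶠ p : ℕ in almostAllPrimes, (p : ℝ) ^ (1 - ε) <
      ({m ∈ Icc 1 ⌊ξ p⌋₊ | ¬ p ∣ m}.sup fun m ↦ orderOf (m : ZMod p) : ℕ) := by
  obtain ⟨K, hK⟩ := exists_forall_eventually_exists_rpow_lt_orderOf hε
  refine ⟨K, fun ξ hξ ↦ ?_⟩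
  have hξ' : ∀ᶠ p : ℕ in almostAllPrimes, (K : ℝ) ≤ ξ p :=
    (tendsto_natCast_atTop_atTop.eventually hξ).filter_mono almostAllPrimes_le_atTop
  filter_upwards [hK, hξ'] with p ⟨n, hnK, hpn, hn⟩ hKξ
  have hn0 : 0 < n := Nat.pos_of_ne_zero fun h ↦ hpn (h ▸ dvd_zero p)
  have hnξ : n ≤ ⌊ξ p⌋₊ := hnK.trans (Nat.le_floor hKξ)
  have hmem : n ∈ {m ∈ Icc 1 ⌊ξ p⌋₊ | ¬ p ∣ m} :=
    mem_filter.2 ⟨mem_Icc.2 ⟨hn0, hnξ⟩, hpn⟩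
  exact hn.trans_le (Nat.cast_le.2 (le_sup (f := fun m : ℕ ↦ orderOf (m : ZMod p)) hmem))

/-- Let `ξ(x)` be any function tending to infinity. For each fixed `ε > 0` and
almost all primes `p`, we have `L(p) > p^(1-ε)`, where `L(p)` is the maximum
multiplicative order mod `p` of the integers `1, 2, …, ⌊ξ(p)⌋` not divisible by `p`. -/
theorem stmt_4 (ξ : ℝ → ℝ) (hξ : Tendsto ξ atTop atTop) (ε : ℝ) (hε : 0 < ε) :
    (fun x : ℝ => (Nat.card {p : ℕ |
        Nat.Prime p ∧ (p : ℝ) ≤ x ∧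
        ((((Finset.Icc 1 ⌊ξ (p : ℝ)⌋₊).filter (fun m => ¬ p ∣ m)).sup
            (fun m => orderOf ((m : ZMod p))) : ℕ) : ℝ) ≤ (p : ℝ) ^ (1 - ε)} : ℝ))
      =o[atTop] (fun x : ℝ => x / Real.log x) := by
  obtain ⟨K, hK⟩ := stmt_4_general hε
  simpa only [primeCount, Set.mem_ofPred_eq, not_lt] using
    isLittleO_primeCount_of_eventually (hK ξ (hξ.eventually_ge_atTop K))
end

section
/- Let A = (2·3·5·7·11)^9. Then, as x → ∞, for all but o(x/log x) primes p ≤ x there exist positive integers m and n such that p divides the product ∏_{a | A, a > 1} (a^m + a^n + 1). -/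
open Filter Asymptotics

/-!
A second moment count of incidences between points and lines over the field with `q` elements shows
that a subgroup `H` of its units with `|H| ^ 4 > q ^ 3` contains a solution of `u + v + 1 = 0`.
Hence a prime `p` is unexceptional as soon as some divisor `d > 1` of `A` has order greater than
`p ^ (3 / 4)` modulo `p`.

Let `r` be the number of multiplicatively independent integers `a i` with `A = (∏ i, a i) ^ b`, and
fix `θ < 1 / (r + 1)`. If the `a i` generate fewer than about `p ^ (r * θ)` residues, the pigeonhole
principle gives a relation among them with exponents at most `p ^ θ`, so `p` divides one of few
fixed nonzero integers, each with few prime factors. This excludes only `O(x ^ (θ * (r + 1)))`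
primes up to `x`.

Otherwise let `N` be the order of the group generated by the `a i`. The logarithm of the index of
the subgroup generated by a monomial is the sum of `Λ d` over the `d ∣ N` dividing that index. When
`d > b` is a prime power, this divisibility holds for at most a fraction `1 / (b + 1)` of the
monomials with exponents in `[0, b]`. Averaging over the nontrivial monomials yields one of order at
least about `N ^ c`, where `c = ((b + 1) ^ r - (b + 1) ^ (r - 1)) / ((b + 1) ^ r - 1)`. For `r = 5`
and `b = 9` this suffices, because `(90000 / 99999) * (5 / 6) > 3 / 4`.
-/

section Incidence

open Finset

variable {F : Type*} [Field F]

/-- The point `z` lies on the line `l`. The pair `l = (m, k)` encodes the line `y + m x + k = 0`,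
so that points and lines play symmetric roles and vertical lines are left out. -/
def Incident (l z : F × F) : Prop :=
  z.2 + l.1 * z.1 + l.2 = 0

theorem Incident.snd_eq {l z : F × F} (h : Incident l z) : l.2 = -(z.2 + l.1 * z.1) :=
  (neg_eq_of_add_eq_zero_right h).symm

theorem incident_mk_neg (z : F × F) (m : F) : Incident (m, -(z.2 + m * z.1)) z :=
  add_neg_cancel _

theorem Incident.line_unique {l l' z w : F × F} (hzw : z ≠ w) (hlz : Incident l z)
    (hlw : Incident l w) (hlz' : Incident l' z) (hlw' : Incident l' w) : l = l' := by
  unfold Incident at hlz hlw hlz' hlw'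
  have hslope : (l.1 - l'.1) * (z.1 - w.1) = 0 := by
    linear_combination hlz - hlw - hlz' + hlw'
  have hfst : z.1 ≠ w.1 := fun h ↦
    hzw (Prod.ext h (by linear_combination hlz - hlw - l.1 * h))
  have hm : l.1 = l'.1 :=
    sub_eq_zero.mp ((mul_eq_zero.mp hslope).resolve_right (sub_ne_zero.mpr hfst))
  exact Prod.ext hm (by linear_combination hlz - hlz' - z.1 * hm)

variable [Fintype F]

open Classical in
theorem card_filter_incident (z : F × F) : #{l | Incident l z} = Fintype.card F := by
  rw [← card_univ]
  refine card_nbij' Prod.fst (fun m ↦ (m, -(z.2 + m * z.1))) (fun _ _ ↦ mem_univ _)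
    (fun m _ ↦ mem_filter.mpr ⟨mem_univ _, incident_mk_neg z m⟩) (fun l hl ↦ ?_)
    (fun _ _ ↦ rfl)
  exact Prod.ext rfl (Incident.snd_eq (by simpa using hl)).symm

open Classical in
theorem sum_card_filter_incident (P : Finset (F × F)) :
    ∑ l, #{z ∈ P | Incident l z} = Fintype.card F * #P := by
  calc ∑ l, #{z ∈ P | Incident l z} = ∑ z ∈ P, #{l | Incident l z} :=
        sum_card_bipartiteAbove_eq_sum_card_bipartiteBelow Incident
    _ = Fintype.card F * #P := by simp [card_filter_incident, mul_comm]

open Classical in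
theorem sum_sq_card_filter_incident_le (P : Finset (F × F)) :
    ∑ l, #{z ∈ P | Incident l z} ^ 2 ≤ #P * (Fintype.card F + #P) := by
  have hpair (z w : F × F) :
      #{l | Incident l z ∧ Incident l w} ≤ (if w = z then Fintype.card F else 0) + 1 := by
    split_ifs with h
    · simp [h, card_filter_incident]
    · simp only [zero_add, card_le_one, mem_filter, mem_univ, true_and]
      exact fun l hl l' hl' ↦ Incident.line_unique (Ne.symm h) hl.1 hl.2 hl'.1 hl'.2
  calc ∑ l, #{z ∈ P | Incident l z} ^ 2
      = ∑ l, #{zw ∈ P ×ˢ P | Incident l zw.1 ∧ Incident l zw.2} := by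
        simp only [sq, filter_product, card_product]
    _ = ∑ zw ∈ P ×ˢ P, #{l | Incident l zw.1 ∧ Incident l zw.2} :=
        sum_card_bipartiteAbove_eq_sum_card_bipartiteBelow
          fun l (zw : (F × F) × (F × F)) ↦ Incident l zw.1 ∧ Incident l zw.2
    _ ≤ ∑ z ∈ P, ∑ w ∈ P, ((if w = z then Fintype.card F else 0) + 1) := by
        rw [sum_product]
        exact sum_le_sum fun z _ ↦ sum_le_sum fun w _ ↦ hpair z w
    _ = ∑ _ ∈ P, (Fintype.card F + #P) :=
        sum_congr rfl fun z hz ↦ by simp [sum_add_distrib, hz]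
    _ = #P * (Fintype.card F + #P) := by rw [sum_const, smul_eq_mul]

open Classical in
-- This is the variance of the number of points of `P` on a random line, scaled to avoid division.
theorem sum_sq_card_mul_card_filter_incident_sub_le (P : Finset (F × F)) :
    ∑ l, ((Fintype.card F : ℤ) * #{z ∈ P | Incident l z} - #P) ^ 2 ≤
      (Fintype.card F : ℤ) ^ 3 * #P := by
  set q := Fintype.card F
  have hfirst : ∑ l, (#{z ∈ P | Incident l z} : ℤ) = q * #P := by
    exact_mod_cast sum_card_filter_incident P
  have hsecond : ∑ l, (#{z ∈ P | Incident l z} : ℤ) ^ 2 ≤ #P * (q + #P) := by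
    exact_mod_cast sum_sq_card_filter_incident_le P
  calc ∑ l, ((q : ℤ) * #{z ∈ P | Incident l z} - #P) ^ 2
      = q ^ 2 * ∑ l, (#{z ∈ P | Incident l z} : ℤ) ^ 2
          - 2 * q * #P * ∑ l, (#{z ∈ P | Incident l z} : ℤ) + q ^ 2 * #P ^ 2 := by
        simp only [sub_sq, mul_pow, sum_add_distrib, sum_sub_distrib, mul_sum, sum_const,
          card_univ, Fintype.card_prod, nsmul_eq_mul, Nat.cast_mul]
        simp only [← mul_sum, ← sum_mul]
        ring
    _ ≤ q ^ 2 * (#P * (q + #P)) - 2 * q * #P * (q * #P) + q ^ 2 * #P ^ 2 := by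
        rw [hfirst]; gcongr
    _ = q ^ 3 * #P := by ring

theorem exists_incident_of_card_pow_three_lt {P L : Finset (F × F)}
    (h : Fintype.card F ^ 3 < #P * #L) : ∃ l ∈ L, ∃ z ∈ P, Incident l z := by
  classical
  by_contra! hno
  have hbound : (#L : ℤ) * (#P : ℤ) ^ 2 ≤ (Fintype.card F : ℤ) ^ 3 * #P :=
    calc (#L : ℤ) * (#P : ℤ) ^ 2
        = ∑ l ∈ L, ((Fintype.card F : ℤ) * #{z ∈ P | Incident l z} - #P) ^ 2 := by
          rw [← nsmul_eq_mul, ← sum_const]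
          refine sum_congr rfl fun l hl ↦ ?_
          rw [filter_false_of_mem (hno l hl)]
          simp
      _ ≤ ∑ l, ((Fintype.card F : ℤ) * #{z ∈ P | Incident l z} - #P) ^ 2 :=
          sum_le_univ_sum_of_nonneg fun _ ↦ sq_nonneg _
      _ ≤ (Fintype.card F : ℤ) ^ 3 * #P := sum_sq_card_mul_card_filter_incident_sub_le P
  have hP : 0 < #P := Nat.pos_of_mul_pos_right (Nat.zero_lt_of_lt h)
  have : #P * #L * #P ≤ Fintype.card F ^ 3 * #P := by
    zify; linarith
  exact h.not_ge (Nat.le_of_mul_le_mul_right this hP)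

theorem exists_mul_add_mul_add_eq_zero_of_card_pow_three_lt (H : Subgroup Fˣ)
    (hH : Fintype.card F ^ 3 < Nat.card H ^ 4) (a b c : Fˣ) :
    ∃ u ∈ H, ∃ v ∈ H, (a * u + b * v + c : F) = 0 := by
  classical
  let coset (s : Fˣ) : Finset F := univ.image fun u : H ↦ (s * (u : Fˣ) : F)
  have hcard (s : Fˣ) : #(coset s) = Nat.card H := by
    rw [card_image_of_injective, card_univ, Nat.card_eq_fintype_card]
    exact fun u v huv ↦ Subtype.ext (Units.ext (s.mul_right_inj.mp huv))
  obtain ⟨⟨m, k⟩, hl, ⟨x, y⟩, hz, hinc⟩ :=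
    exists_incident_of_card_pow_three_lt (P := coset 1 ×ˢ coset a) (L := coset b ×ˢ coset c)
      (hH.trans_eq (by simp only [card_product, hcard]; ring))
  simp only [coset, mem_product, mem_image, mem_univ, true_and] at hl hz
  obtain ⟨⟨⟨m, hm⟩, rfl⟩, ⟨⟨k, hk⟩, rfl⟩⟩ := hl
  obtain ⟨⟨⟨x, hx⟩, rfl⟩, ⟨⟨y, hy⟩, rfl⟩⟩ := hz
  refine ⟨y * k⁻¹, H.mul_mem hy (H.inv_mem hk), m * x * k⁻¹,
    H.mul_mem (H.mul_mem hm hx) (H.inv_mem hk), ?_⟩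
  have hk_inv : (k : F) * (k⁻¹ : Fˣ) = 1 := k.mul_inv
  simp only [Incident, Units.val_one, one_mul] at hinc
  simp only [Units.val_mul]
  linear_combination ((k⁻¹ : Fˣ) : F) * hinc - c * hk_inv

theorem exists_pow_add_pow_add_one_eq_zero (x : Fˣ) (hx : Fintype.card F ^ 3 < orderOf x ^ 4) :
    ∃ m n : ℕ, 0 < m ∧ 0 < n ∧ (x : F) ^ m + (x : F) ^ n + 1 = 0 := by
  have hpos (u : Fˣ) (hu : u ∈ Subgroup.zpowers x) : ∃ m : ℕ, 0 < m ∧ x ^ m = u := by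
    obtain ⟨m, rfl⟩ := mem_powers_iff_mem_zpowers.mpr hu
    exact ⟨m + orderOf x, Nat.add_pos_right _ (orderOf_pos x), by simp [pow_add]⟩
  obtain ⟨u, hu, v, hv, huv⟩ := exists_mul_add_mul_add_eq_zero_of_card_pow_three_lt
    (Subgroup.zpowers x) (by rwa [Nat.card_zpowers]) 1 1 1
  obtain ⟨m, hm, rfl⟩ := hpos u hu
  obtain ⟨n, hn, rfl⟩ := hpos v hv
  exact ⟨m, n, hm, hn, by simpa using huv⟩

end Incidence

section LargeOrder

open Finset ArithmeticFunction

theorem log_card_sub_log_orderOf_eq_sum_vonMangoldt {G : Type*} [Group G] [Finite G]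
    [DecidableEq G] (x : G) :
    Real.log (Nat.card G) - Real.log (orderOf x) =
      ∑ d ∈ (Nat.card G).divisors with x ^ (Nat.card G / d) = 1, vonMangoldt d := by
  have hdvd : orderOf x ∣ Nat.card G := orderOf_dvd_natCard x
  have horder : (orderOf x : ℝ) ≠ 0 := Nat.cast_ne_zero.mpr (orderOf_pos x).ne'
  rw [← Real.log_div (Nat.cast_ne_zero.mpr Nat.card_pos.ne') horder, ← Nat.cast_div hdvd horder,
    ← vonMangoldt_sum]
  refine sum_congr (Finset.ext fun d ↦ ?_) fun _ _ ↦ rfl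
  have hd : d ∣ Nat.card G / orderOf x ↔ d ∣ Nat.card G ∧ x ^ (Nat.card G / d) = 1 := by
    rw [← orderOf_dvd_iff_pow_eq_one]
    constructor
    · intro h
      have hdN : d ∣ Nat.card G := h.trans (Nat.div_dvd_of_dvd hdvd)
      rw [Nat.dvd_div_iff_mul_dvd hdvd, mul_comm] at h
      exact ⟨hdN, (Nat.dvd_div_iff_mul_dvd hdN).mpr h⟩
    · rintro ⟨hdN, h⟩
      rw [Nat.dvd_div_iff_mul_dvd hdN, mul_comm] at h
      exact (Nat.dvd_div_iff_mul_dvd hdvd).mpr h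
  simp only [mem_filter, Nat.mem_divisors, hd, (Nat.div_pos (Nat.le_of_dvd Nat.card_pos hdvd)
    (orderOf_pos x)).ne', Nat.card_pos.ne', ne_eq, not_false_eq_true, and_true]

variable {ι G : Type*} [CommGroup G]

theorem exists_pow_ne_one_of_closure_range_eq_top [IsCyclic G] {g : ι → G}
    (hg : Subgroup.closure (Set.range g) = ⊤) {n : ℕ} (hn : ¬Nat.card G ∣ n) :
    ∃ i, g i ^ n ≠ 1 := by
  by_contra! hall
  rw [← IsCyclic.exponent_eq_card, Monoid.exponent_dvd_iff_forall_pow_eq_one] at hn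
  have hker : Subgroup.closure (Set.range g) ≤ (powMonoidHom n : G →* G).ker :=
    (Subgroup.closure_le _).mpr (Set.range_subset_iff.mpr hall)
  exact hn fun x ↦ hker (hg ▸ Subgroup.mem_top x)

theorem exists_orderOf_pow_card_div_eq [Finite G] [IsCyclic G] {g : ι → G}
    (hg : Subgroup.closure (Set.range g) = ⊤) {d : ℕ} (hd : IsPrimePow d) (hdG : d ∣ Nat.card G) :
    ∃ i, orderOf (g i ^ (Nat.card G / d)) = d := by
  obtain ⟨q, k, hq, hk, rfl⟩ := (isPrimePow_nat_iff d).mp hd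
  obtain ⟨k, rfl⟩ := Nat.exists_eq_add_one.mpr hk
  have : Fact q.Prime := ⟨hq⟩
  set M := Nat.card G / q ^ (k + 1)
  have hM : M * q ^ (k + 1) = Nat.card G := Nat.div_mul_cancel hdG
  have hMpos : 0 < M := Nat.pos_of_mul_pos_right (hM ▸ Nat.card_pos)
  have hndvd : ¬Nat.card G ∣ M * q ^ k := by
    rw [← hM, Nat.mul_dvd_mul_iff_left hMpos, Nat.pow_dvd_pow_iff_le_right hq.one_lt]
    exact k.not_succ_le_self
  obtain ⟨i, hi⟩ := exists_pow_ne_one_of_closure_range_eq_top hg hndvd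
  exact ⟨i, orderOf_eq_prime_pow (by rwa [← pow_mul]) (by rw [← pow_mul, hM, pow_card_eq_one'])⟩

variable [Fintype ι]

theorem card_filter_prod_pow_eq_le [DecidableEq ι] [DecidableEq G] {B : ℕ} (h : ι → G) {i : ι}
    (hi : B ≤ orderOf (h i)) (c : G) :
    #{e : ι → Fin B | ∏ j, h j ^ (e j : ℕ) = c} ≤ B ^ (Fintype.card ι - 1) := by
  have hcard : #(univ : Finset ({j // j ≠ i} → Fin B)) = B ^ (Fintype.card ι - 1) := by
    simp [Fintype.card_subtype_compl]
  rw [← hcard]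
  refine card_le_card_of_injOn (fun e j ↦ e j) (fun _ _ ↦ mem_univ _) fun e he e' he' hrest ↦ ?_
  have hne (j : {j // j ≠ i}) : e j = e' j := congrFun hrest j
  simp only [coe_filter_univ, Set.mem_ofPred_eq, Fintype.prod_eq_mul_prod_subtype_ne _ i, hne]
    at he he'
  have heq : e i = e' i := Fin.ext <| pow_injOn_Iio_orderOf ((e i).2.trans_le hi)
    ((e' i).2.trans_le hi) (mul_right_cancel (he.trans he'.symm))
  exact funext fun j ↦ if hj : j = i then hj ▸ heq else hne ⟨j, hj⟩

variable [Finite G] [IsCyclic G] {g : ι → G}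

theorem card_filter_prod_pow_mul_vonMangoldt_le [DecidableEq ι] [DecidableEq G]
    (hg : Subgroup.closure (Set.range g) = ⊤) (b : ℕ) {d : ℕ} (hd : d ∣ Nat.card G) :
    #{e : ι → Fin (b + 1) | (∏ i, g i ^ (e i : ℕ)) ^ (Nat.card G / d) = 1} * vonMangoldt d ≤
      (b + 1) ^ (Fintype.card ι - 1) * vonMangoldt d +
        if d ≤ b then (b + 1) ^ Fintype.card ι * vonMangoldt d else 0 := by
  by_cases hpp : IsPrimePow d
  · split_ifs with hdb
    · have hcard : #{e : ι → Fin (b + 1) | (∏ i, g i ^ (e i : ℕ)) ^ (Nat.card G / d) = 1} ≤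
          (b + 1) ^ Fintype.card ι := (card_le_univ _).trans_eq (by simp)
      refine le_add_of_nonneg_of_le (by positivity) ?_
      gcongr
      exact_mod_cast hcard
    · obtain ⟨i, hi⟩ := exists_orderOf_pow_card_div_eq hg hpp hd
      have hcard := card_filter_prod_pow_eq_le (fun j ↦ g j ^ (Nat.card G / d))
        (show b + 1 ≤ _ from hi.symm ▸ not_le.mp hdb) 1
      simp only [pow_right_comm _ (Nat.card G / d), prod_pow] at hcard
      rw [add_zero]
      gcongr
      exact_mod_cast hcard
  · simp [vonMangoldt_eq_zero_iff.mpr hpp]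

theorem sum_log_card_sub_log_orderOf_le [DecidableEq ι]
    (hg : Subgroup.closure (Set.range g) = ⊤) (b : ℕ) :
    ∑ e : ι → Fin (b + 1),
        (Real.log (Nat.card G) - Real.log (orderOf (∏ i, g i ^ (e i : ℕ)))) ≤
      (b + 1) ^ (Fintype.card ι - 1) * Real.log (Nat.card G) +
        (b + 1) ^ Fintype.card ι * Chebyshev.psi b := by
  classical
  have hsmall : ∑ d ∈ (Nat.card G).divisors with d ≤ b, vonMangoldt d ≤ Chebyshev.psi b := by
    rw [Chebyshev.psi, Nat.floor_natCast]
    refine sum_le_sum_of_subset_of_nonneg (fun d hd ↦ ?_) fun _ _ _ ↦ vonMangoldt_nonneg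
    rw [mem_filter] at hd
    exact mem_Ioc.mpr ⟨Nat.pos_of_mem_divisors hd.1, hd.2⟩
  calc _ = ∑ d ∈ (Nat.card G).divisors,
        #{e : ι → Fin (b + 1) | (∏ i, g i ^ (e i : ℕ)) ^ (Nat.card G / d) = 1} *
          vonMangoldt d := by
        simp only [log_card_sub_log_orderOf_eq_sum_vonMangoldt, sum_filter]
        rw [sum_comm]
        simp only [← sum_filter, sum_const, nsmul_eq_mul]
    _ ≤ ∑ d ∈ (Nat.card G).divisors, ((b + 1) ^ (Fintype.card ι - 1) * vonMangoldt d +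
          if d ≤ b then (b + 1) ^ Fintype.card ι * vonMangoldt d else 0) :=
        sum_le_sum fun d hd ↦
          card_filter_prod_pow_mul_vonMangoldt_le hg b (Nat.dvd_of_mem_divisors hd)
    _ = (b + 1) ^ (Fintype.card ι - 1) * Real.log (Nat.card G) +
          (b + 1) ^ Fintype.card ι * ∑ d ∈ (Nat.card G).divisors with d ≤ b, vonMangoldt d := by
        rw [sum_add_distrib, ← mul_sum, vonMangoldt_sum, ← sum_filter, ← mul_sum]
    _ ≤ _ := by gcongr

theorem exists_ne_zero_lt_log_orderOf_prod_pow (hg : Subgroup.closure (Set.range g) = ⊤) (b : ℕ)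
    {t : ℝ}
    (ht : ((b + 1) ^ Fintype.card ι - 1) * t + (b + 1) ^ Fintype.card ι * Chebyshev.psi b <
      ((b + 1) ^ Fintype.card ι - (b + 1) ^ (Fintype.card ι - 1)) * Real.log (Nat.card G)) :
    ∃ e : ι → Fin (b + 1), e ≠ 0 ∧ t < Real.log (orderOf (∏ i, g i ^ (e i : ℕ))) := by
  classical
  by_contra! hle
  have hcard : Fintype.card (ι → Fin (b + 1)) = (b + 1) ^ Fintype.card ι := by simp
  have hsum : ∑ e : ι → Fin (b + 1), Real.log (orderOf (∏ i, g i ^ (e i : ℕ))) ≤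
      ((b + 1) ^ Fintype.card ι - 1) * t := by
    calc _ = ∑ e ∈ univ.erase (0 : ι → Fin (b + 1)),
          Real.log (orderOf (∏ i, g i ^ (e i : ℕ))) := by
          rw [sum_erase]
          simp
      _ ≤ ∑ _ ∈ univ.erase (0 : ι → Fin (b + 1)), t :=
          sum_le_sum fun e he ↦ hle e (ne_of_mem_erase he)
      _ = ((b + 1) ^ Fintype.card ι - 1) * t := by
          rw [sum_const, nsmul_eq_mul, cast_card_erase_of_mem (mem_univ _), card_univ, hcard]
          push_cast
          rfl
  have hindex := sum_log_card_sub_log_orderOf_le hg b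
  rw [sum_sub_distrib, sum_const, card_univ, hcard, nsmul_eq_mul] at hindex
  push_cast at hindex
  linarith

theorem exists_ne_zero_lt_log_orderOf_prod_pow_of_closure (g : ι → G)
    (b : ℕ) {t : ℝ}
    (ht : ((b + 1) ^ Fintype.card ι - 1) * t + (b + 1) ^ Fintype.card ι * Chebyshev.psi b <
      ((b + 1) ^ Fintype.card ι - (b + 1) ^ (Fintype.card ι - 1)) *
        Real.log (Nat.card (Subgroup.closure (Set.range g)))) :
    ∃ e : ι → Fin (b + 1), e ≠ 0 ∧ t < Real.log (orderOf (∏ i, g i ^ (e i : ℕ))) := by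
  let K := Subgroup.closure (Set.range g)
  let g' (i : ι) : K := ⟨g i, Subgroup.subset_closure (Set.mem_range_self i)⟩
  have hrange : Set.range g' = (↑) ⁻¹' Set.range g := by
    ext x
    simp [g', Subtype.ext_iff]
  obtain ⟨e, he, hlt⟩ := exists_ne_zero_lt_log_orderOf_prod_pow (g := g')
    (hrange ▸ Subgroup.closure_closure_coe_preimage) b ht
  have hcoe : ((∏ i, g' i ^ (e i : ℕ) : K) : G) = ∏ i, g i ^ (e i : ℕ) := by simp [g']
  rw [← Subgroup.orderOf_coe, hcoe] at hlt
  exact ⟨e, he, hlt⟩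

end LargeOrder

section Relations

open Finset

/-- A finite family in a commutative monoid is multiplicatively independent if no two distinct
monomials in its members coincide. For natural numbers this forces all members to be at least `2`,
and distinct primes are the main example. -/
def MulIndependent {ι M : Type*} [Fintype ι] [CommMonoid M] (a : ι → M) : Prop :=
  Function.Injective fun e : ι → ℕ ↦ ∏ i, a i ^ e i

variable {ι : Type*} [Fintype ι]

theorem mulIndependent_of_injective_of_prime {q : ι → ℕ} (hinj : Function.Injective q)
    (hq : ∀ i, (q i).Prime) : MulIndependent q := by
  classical
  have hfactorization (e : ι → ℕ) (j : ι) : (∏ i, q i ^ e i).factorization (q j) = e j := by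
    simp only [Nat.factorization_prod_apply fun i _ ↦ pow_ne_zero _ (hq i).ne_zero,
      (hq _).factorization_pow, Finsupp.single_apply, hinj.eq_iff, sum_ite_eq', mem_univ, if_true]
  intro e e' h
  funext j
  rw [← hfactorization e j, ← hfactorization e' j]
  exact congrArg (fun n : ℕ ↦ n.factorization (q j)) h

theorem MulIndependent.pos {a : ι → ℕ} (ha : MulIndependent a) (i : ι) : 0 < a i := by
  classical
  refine Nat.pos_of_ne_zero fun hi ↦ ?_
  have hprod (k : ℕ) (hk : k ≠ 0) : ∏ j, a j ^ (Pi.single i k : ι → ℕ) j = 0 :=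
    prod_eq_zero (mem_univ i) (by simp [hi, hk])
  have := ha ((hprod 1 one_ne_zero).trans (hprod 2 two_ne_zero).symm)
  simpa using congrFun this i

theorem MulIndependent.prod_pow_mem_divisors {a : ι → ℕ} (ha : MulIndependent a) {b : ℕ}
    {e : ι → Fin (b + 1)} (he : e ≠ 0) :
    ∏ i, a i ^ (e i : ℕ) ∈ ((∏ i, a i) ^ b).divisors.filter (fun d ↦ 1 < d) := by
  have hdvd : ∏ i, a i ^ (e i : ℕ) ∣ (∏ i, a i) ^ b := by
    rw [← prod_pow]
    exact prod_dvd_prod_of_dvd _ _ fun i _ ↦ pow_dvd_pow _ (Fin.is_le _)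
  have hpos : 0 < ∏ i, a i ^ (e i : ℕ) := prod_pos fun i _ ↦ pow_pos (ha.pos i) _
  have hne : ∏ i, a i ^ (e i : ℕ) ≠ 1 := fun h ↦ he <| funext fun i ↦
    Fin.ext (congrFun (ha (h.trans (by simp) : _ = ∏ i, a i ^ (0 : ι → ℕ) i)) i)
  exact mem_filter.mpr ⟨Nat.mem_divisors.mpr ⟨hdvd,
    (pow_pos (prod_pos fun i _ ↦ ha.pos i) b).ne'⟩, Nat.lt_of_le_of_ne hpos hne.symm⟩

theorem exists_prod_zpow_eq_one_of_card_closure_lt {G : Type*} [CommGroup G] (g : ι → G)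
    [Finite (Subgroup.closure (Set.range g))] {E : ℕ}
    (hE : Nat.card (Subgroup.closure (Set.range g)) < (E + 1) ^ Fintype.card ι) :
    ∃ v : ι → ℤ, v ≠ 0 ∧ (∀ i, v i ∈ Icc (-E : ℤ) E) ∧ ∏ i, g i ^ v i = 1 := by
  classical
  have := Fintype.ofFinite (Subgroup.closure (Set.range g))
  let monomial (e : ι → Fin (E + 1)) : Subgroup.closure (Set.range g) :=
    ⟨∏ i, g i ^ (e i : ℕ),
      prod_mem fun i _ ↦ pow_mem (Subgroup.subset_closure (Set.mem_range_self i)) _⟩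
  obtain ⟨e, e', hne, heq⟩ := Fintype.exists_ne_map_eq_of_card_lt monomial
    (by rw [← Nat.card_eq_fintype_card]; simpa using hE)
  refine ⟨fun i ↦ (e i : ℤ) - e' i, fun h ↦ hne (funext fun i ↦ ?_), fun i ↦ ?_, ?_⟩
  · exact Fin.ext (Int.ofNat_inj.mp (sub_eq_zero.mp (congrFun h i)))
  · have := (e i).is_le
    have := (e' i).is_le
    rw [mem_Icc]
    lia
  · simp only [zpow_sub, zpow_natCast, prod_mul_distrib, prod_inv_distrib]
    exact mul_inv_eq_one.mpr (congrArg Subtype.val heq)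

/-- The difference of the two sides of the relation `∏ i, a i ^ v i = 1` once all negative
exponents have been moved to the right-hand side. -/
def relationDiff (a : ι → ℕ) (v : ι → ℤ) : ℤ :=
  ((∏ i, a i ^ (v i).toNat : ℕ) : ℤ) - (∏ i, a i ^ (-v i).toNat : ℕ)

theorem MulIndependent.relationDiff_ne_zero {a : ι → ℕ} (ha : MulIndependent a) {v : ι → ℤ}
    (hv : v ≠ 0) : relationDiff a v ≠ 0 := by
  intro h
  have hexp := ha (Int.ofNat_inj.mp (sub_eq_zero.mp h))
  refine hv (funext fun i ↦ ?_)
  have := congrFun hexp i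
  rw [Pi.zero_apply]
  lia

theorem MulIndependent.natAbs_relationDiff_le {a : ι → ℕ} (ha : MulIndependent a) {v : ι → ℤ}
    {E : ℕ} (hv : ∀ i, v i ∈ Icc (-E : ℤ) E) : (relationDiff a v).natAbs ≤ (∏ i, a i) ^ E := by
  have hmonomial (e : ι → ℕ) (he : ∀ i, e i ≤ E) : ∏ i, a i ^ e i ≤ (∏ i, a i) ^ E := by
    rw [← prod_pow]
    exact prod_le_prod' fun i _ ↦ Nat.pow_le_pow_right (ha.pos i) (he i)
  simp only [mem_Icc] at hv
  have hleft := hmonomial (fun i ↦ (v i).toNat) fun i ↦ by have := hv i; lia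
  have hright := hmonomial (fun i ↦ (-v i).toNat) fun i ↦ by have := hv i; lia
  rw [relationDiff]
  lia

theorem natCast_dvd_relationDiff_of_prod_zpow_eq_one {p : ℕ} {a : ι → ℕ} {g : ι → (ZMod p)ˣ}
    (hg : ∀ i, (g i : ZMod p) = a i) {v : ι → ℤ} (hv : ∏ i, g i ^ v i = 1) :
    (p : ℤ) ∣ relationDiff a v := by
  have hunits : ∏ i, g i ^ (v i).toNat = ∏ i, g i ^ (-v i).toNat := by
    rw [← div_eq_one, ← prod_div_distrib, ← hv]
    refine prod_congr rfl fun i _ ↦ ?_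
    rw [← zpow_natCast, ← zpow_natCast, div_eq_mul_inv, ← zpow_sub, Int.toNat_sub_toNat_neg]
  have hzmod := congrArg Units.val hunits
  simp only [Units.coe_prod, Units.val_pow_eq_pow_val, hg] at hzmod
  rw [← ZMod.intCast_zmod_eq_zero_iff_dvd, relationDiff]
  push_cast
  exact sub_eq_zero.mpr hzmod

theorem two_pow_card_primeFactors_le {n : ℕ} (hn : n ≠ 0) : 2 ^ #n.primeFactors ≤ n :=
  (pow_card_le_prod _ _ _ fun _ hq ↦ (Nat.prime_of_mem_primeFactors hq).two_le).trans
    (Nat.le_of_dvd (Nat.pos_of_ne_zero hn) (Nat.prod_primeFactors_dvd n))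

variable [DecidableEq ι]

/-- The primes modulo which the `a i` satisfy a nontrivial multiplicative relation with exponents
at most `E` in absolute value. -/
noncomputable def relationPrimes (a : ι → ℕ) (E : ℕ) : Finset ℕ :=
  ((Fintype.piFinset fun _ ↦ Icc (-E : ℤ) E).erase 0).biUnion fun v ↦
    (relationDiff a v).natAbs.primeFactors

theorem MulIndependent.card_relationPrimes_le {a : ι → ℕ} (ha : MulIndependent a) (E : ℕ) :
    #(relationPrimes a E) ≤ (2 * E + 1) ^ Fintype.card ι * ((∏ i, a i) * E) := by
  have hbox : #((Fintype.piFinset fun _ : ι ↦ Icc (-E : ℤ) E).erase 0) ≤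
      (2 * E + 1) ^ Fintype.card ι := by
    refine (card_erase_le).trans_eq ?_
    simp only [Fintype.card_piFinset, Int.card_Icc, prod_const, card_univ]
    congr 1
    lia
  refine (card_biUnion_le_card_mul _ _ _ fun v hv ↦ ?_).trans (Nat.mul_le_mul_right _ hbox)
  rw [mem_erase, Fintype.mem_piFinset] at hv
  rw [← Nat.pow_le_pow_iff_right one_lt_two]
  calc 2 ^ #(relationDiff a v).natAbs.primeFactors ≤ (relationDiff a v).natAbs :=
        two_pow_card_primeFactors_le (Int.natAbs_ne_zero.mpr (ha.relationDiff_ne_zero hv.1))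
    _ ≤ (∏ i, a i) ^ E := ha.natAbs_relationDiff_le hv.2
    _ ≤ (2 ^ ∏ i, a i) ^ E := Nat.pow_le_pow_left Nat.lt_two_pow_self.le E
    _ = 2 ^ ((∏ i, a i) * E) := (pow_mul ..).symm

theorem MulIndependent.mem_relationPrimes_of_card_closure_lt {a : ι → ℕ} (ha : MulIndependent a)
    {p : ℕ} [hp : Fact p.Prime] {g : ι → (ZMod p)ˣ} (hg : ∀ i, (g i : ZMod p) = a i) {E : ℕ}
    (hE : Nat.card (Subgroup.closure (Set.range g)) < (E + 1) ^ Fintype.card ι) :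
    p ∈ relationPrimes a E := by
  obtain ⟨v, hv, hvE, hrel⟩ := exists_prod_zpow_eq_one_of_card_closure_lt g hE
  have hdvd : p ∣ (relationDiff a v).natAbs :=
    Int.natCast_dvd.mp (natCast_dvd_relationDiff_of_prod_zpow_eq_one hg hrel)
  exact mem_biUnion.mpr ⟨v, mem_erase.mpr ⟨hv, Fintype.mem_piFinset.mpr hvE⟩,
    Nat.mem_primeFactors.mpr
      ⟨hp.out, hdvd, Int.natAbs_ne_zero.mpr (ha.relationDiff_ne_zero hv)⟩⟩

end Relations

section ExceptionalPrimes

variable {ι : Type*} [Fintype ι]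

theorem exists_prod_pow_pow_add_pow_add_one_eq_zero {F : Type*} [Field F] [Fintype F]
    (g : ι → Fˣ) (b : ℕ)
    (hg : 3 * ((b + 1) ^ Fintype.card ι - 1) * Real.log (Fintype.card F) +
        4 * ((b + 1) ^ Fintype.card ι * Chebyshev.psi b) <
      4 * ((b + 1) ^ Fintype.card ι - (b + 1) ^ (Fintype.card ι - 1)) *
        Real.log (Nat.card (Subgroup.closure (Set.range g)))) :
    ∃ e : ι → Fin (b + 1), e ≠ 0 ∧ ∃ m n : ℕ, 0 < m ∧ 0 < n ∧
      (∏ i, (g i : F) ^ (e i : ℕ)) ^ m + (∏ i, (g i : F) ^ (e i : ℕ)) ^ n + 1 = 0 := by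
  obtain ⟨e, he, hlog⟩ := exists_ne_zero_lt_log_orderOf_prod_pow_of_closure g b
    (t := 3 / 4 * Real.log (Fintype.card F)) (by linarith)
  have horder : Fintype.card F ^ 3 < orderOf (∏ i, g i ^ (e i : ℕ)) ^ 4 := by
    rw [← Nat.cast_lt (α := ℝ), ← Real.log_lt_log_iff
      (by exact_mod_cast pow_pos Fintype.card_pos 3) (by exact_mod_cast pow_pos (orderOf_pos _) 4)]
    push_cast
    rw [Real.log_pow, Real.log_pow]
    push_cast
    linarith
  refine ⟨e, he, ?_⟩
  simpa only [Units.coe_prod, Units.val_pow_eq_pow_val] using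
    exists_pow_add_pow_add_one_eq_zero _ horder

variable {a : ι → ℕ}

theorem MulIndependent.exists_dvd_pow_add_pow_add_one [DecidableEq ι] (ha : MulIndependent a)
    {p : ℕ} (hp : p.Prime) (hpa : ∀ i, ¬p ∣ a i) {E : ℕ} (hE : p ∉ relationPrimes a E) (b : ℕ)
    (hb : 3 * ((b + 1) ^ Fintype.card ι - 1) * Real.log p +
        4 * ((b + 1) ^ Fintype.card ι * Chebyshev.psi b) <
      4 * ((b + 1) ^ Fintype.card ι - (b + 1) ^ (Fintype.card ι - 1)) *
        (Fintype.card ι * Real.log (E + 1))) :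
    ∃ e : ι → Fin (b + 1), e ≠ 0 ∧ ∃ m n : ℕ, 0 < m ∧ 0 < n ∧
      p ∣ (∏ i, a i ^ (e i : ℕ)) ^ m + (∏ i, a i ^ (e i : ℕ)) ^ n + 1 := by
  have : Fact p.Prime := ⟨hp⟩
  let g (i : ι) : (ZMod p)ˣ :=
    ZMod.unitOfCoprime (a i) ((Nat.Prime.coprime_iff_not_dvd hp).mpr (hpa i)).symm
  have hg (i : ι) : (g i : ZMod p) = a i := ZMod.coe_unitOfCoprime _ _
  have hcard : (E + 1) ^ Fintype.card ι ≤ Nat.card (Subgroup.closure (Set.range g)) :=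
    le_of_not_gt fun h ↦ hE (ha.mem_relationPrimes_of_card_closure_lt hg h)
  have hlog : Fintype.card ι * Real.log (E + 1) ≤
      Real.log (Nat.card (Subgroup.closure (Set.range g))) := by
    rw [← Real.log_pow]
    exact Real.log_le_log (by positivity) (by exact_mod_cast hcard)
  have hcoeff : (0 : ℝ) ≤ (b + 1) ^ Fintype.card ι - (b + 1) ^ (Fintype.card ι - 1) :=
    sub_nonneg.mpr (pow_le_pow_right₀ (by simp) (Nat.sub_le _ 1))
  obtain ⟨e, he, m, n, hm, hn, hzero⟩ := exists_prod_pow_pow_add_pow_add_one_eq_zero g b <| by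
    rw [ZMod.card]
    exact hb.trans_le (by gcongr)
  refine ⟨e, he, m, n, hm, hn, ?_⟩
  rw [← ZMod.natCast_eq_zero_iff]
  simpa [hg] using hzero

/-- The primes `p ≤ x` that divide `∏_{d ∣ A, d > 1} (d ^ m + d ^ n + 1)` for no choice of positive
exponents `m` and `n`. -/
def exceptionalPrimes (A : ℕ) (x : ℝ) : Set ℕ :=
  {p : ℕ | p.Prime ∧ (p : ℝ) ≤ x ∧ ¬∃ m n : ℕ, 0 < m ∧ 0 < n ∧
    p ∣ ∏ d ∈ A.divisors.filter (fun d ↦ 1 < d), (d ^ m + d ^ n + 1)}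

theorem MulIndependent.exists_exceptionalPrimes_subset [DecidableEq ι] (ha : MulIndependent a)
    {b : ℕ} {θ : ℝ} (hθ : 0 ≤ θ)
    (hbθ : 3 * ((b + 1) ^ Fintype.card ι - 1) <
      4 * ((b + 1) ^ Fintype.card ι - (b + 1) ^ (Fintype.card ι - 1)) * (Fintype.card ι * θ)) :
    ∃ N : ℕ, ∀ (x : ℝ) (E : ℕ), x ^ θ ≤ E + 1 →
      exceptionalPrimes ((∏ i, a i) ^ b) x ⊆ (Finset.range N ∪ relationPrimes a E : Finset ℕ) := by
  set D : ℝ := 4 * ((b + 1) ^ Fintype.card ι - (b + 1) ^ (Fintype.card ι - 1))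
  have hD : 0 ≤ D := mul_nonneg zero_le_four
    (sub_nonneg.mpr (pow_le_pow_right₀ (by simp) (Nat.sub_le _ 1)))
  have hlarge : Tendsto (fun p : ℕ ↦ (D * (Fintype.card ι * θ) -
      3 * ((b + 1) ^ Fintype.card ι - 1)) * Real.log p) atTop atTop :=
    (Real.tendsto_log_atTop.comp tendsto_natCast_atTop_atTop).const_mul_atTop (sub_pos.mpr hbθ)
  obtain ⟨N, hN⟩ := eventually_atTop.mp ((hlarge.eventually_gt_atTop
    (4 * ((b + 1) ^ Fintype.card ι * Chebyshev.psi b))).and (eventually_gt_atTop (∏ i, a i)))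
  refine ⟨N, fun x E hxE p ⟨hp, hpx, hexc⟩ ↦ ?_⟩
  by_contra hmem
  rw [Finset.mem_coe, Finset.mem_union, Finset.mem_range, not_or, not_lt] at hmem
  obtain ⟨hlog, hpa⟩ := hN p hmem.1
  have hndvd (i : ι) : ¬p ∣ a i := fun h ↦ hpa.not_ge <|
    Nat.le_of_dvd (Finset.prod_pos fun i _ ↦ ha.pos i)
      (h.trans (Finset.dvd_prod_of_mem a (Finset.mem_univ i)))
  have hp0 : (0 : ℝ) < p := Nat.cast_pos.mpr hp.pos
  have hlogE : θ * Real.log p ≤ Real.log (E + 1) := by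
    rw [← Real.log_rpow hp0]
    exact Real.log_le_log (Real.rpow_pos_of_pos hp0 θ)
      ((Real.rpow_le_rpow hp0.le hpx hθ).trans hxE)
  have hcompare : D * (Fintype.card ι * (θ * Real.log p)) ≤
      D * (Fintype.card ι * Real.log (E + 1)) := by gcongr
  obtain ⟨e, he, m, n, hm, hn, hdvd⟩ :=
    ha.exists_dvd_pow_add_pow_add_one hp hndvd hmem.2 b (by linarith)
  exact hexc ⟨m, n, hm, hn, hdvd.trans
    (Finset.dvd_prod_of_mem (fun d ↦ d ^ m + d ^ n + 1) (ha.prod_pow_mem_divisors he))⟩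

theorem MulIndependent.card_exceptionalPrimes_isBigO_rpow (ha : MulIndependent a) {b : ℕ} {θ : ℝ}
    (hθ : 0 ≤ θ)
    (hbθ : 3 * ((b + 1) ^ Fintype.card ι - 1) <
      4 * ((b + 1) ^ Fintype.card ι - (b + 1) ^ (Fintype.card ι - 1)) * (Fintype.card ι * θ)) :
    (fun x : ℝ ↦ (Nat.card (exceptionalPrimes ((∏ i, a i) ^ b) x) : ℝ)) =O[atTop]
      fun x ↦ x ^ (θ * (Fintype.card ι + 1)) := by
  classical
  obtain ⟨N, hN⟩ := ha.exists_exceptionalPrimes_subset hθ hbθ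
  refine .of_bound (N + 3 ^ Fintype.card ι * ∏ i, a i) ?_
  filter_upwards [eventually_ge_atTop 1] with x hx
  set E := ⌊x ^ θ⌋₊
  have hxθ : 1 ≤ x ^ θ := Real.one_le_rpow hx hθ
  have hE : (E : ℝ) ≤ x ^ θ := Nat.floor_le (zero_le_one.trans hxθ)
  have hcard : Nat.card (exceptionalPrimes ((∏ i, a i) ^ b) x) ≤
      N + (2 * E + 1) ^ Fintype.card ι * ((∏ i, a i) * E) := by
    calc Nat.card (exceptionalPrimes ((∏ i, a i) ^ b) x)
        ≤ (Finset.range N ∪ relationPrimes a E).card := by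
          rw [Nat.card_coe_set_eq, ← Set.ncard_coe_finset]
          exact Set.ncard_le_ncard (hN x E (Nat.lt_floor_add_one _).le) (Finset.finite_toSet _)
      _ ≤ N + (relationPrimes a E).card :=
          (Finset.card_union_le _ _).trans_eq (by rw [Finset.card_range])
      _ ≤ _ := Nat.add_le_add_left (ha.card_relationPrimes_le E) N
  have hpow : x ^ (θ * (Fintype.card ι + 1)) = (x ^ θ) ^ (Fintype.card ι + 1) := by
    rw [← Real.rpow_mul_natCast (by positivity), Nat.cast_add_one]
  rw [Real.norm_natCast, Real.norm_of_nonneg (by positivity), hpow]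
  calc (Nat.card (exceptionalPrimes ((∏ i, a i) ^ b) x) : ℝ)
      ≤ N + (2 * E + 1) ^ Fintype.card ι * ((∏ i, a i : ℕ) * E) := by exact_mod_cast hcard
    _ ≤ N * (x ^ θ) ^ (Fintype.card ι + 1) +
          (3 * x ^ θ) ^ Fintype.card ι * ((∏ i, a i : ℕ) * x ^ θ) := by
        gcongr
        · exact le_mul_of_one_le_right (Nat.cast_nonneg N) (one_le_pow₀ hxθ)
        · linarith
    _ = (N + 3 ^ Fintype.card ι * ∏ i, a i) * (x ^ θ) ^ (Fintype.card ι + 1) := by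
        push_cast
        ring

theorem rpow_one_sub_isLittleO_div_log {δ : ℝ} (hδ : 0 < δ) :
    (fun x : ℝ ↦ x ^ (1 - δ)) =o[atTop] fun x ↦ x / Real.log x := by
  have hlog : (fun x : ℝ ↦ x * (x ^ δ)⁻¹) =o[atTop] fun x ↦ x * (Real.log x)⁻¹ :=
    (isBigO_refl _ _).mul_isLittleO <| (isLittleO_log_rpow_atTop hδ).inv_rev <|
      (eventually_gt_atTop 1).mono fun x hx h ↦ absurd h (Real.log_pos hx).ne'
  refine hlog.congr' ?_ (.of_forall fun x ↦ (div_eq_mul_inv ..).symm)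
  filter_upwards [eventually_gt_atTop 0] with x hx
  rw [Real.rpow_sub hx, Real.rpow_one, div_eq_mul_inv]

theorem stmt_5_general (ha : MulIndependent a) (b : ℕ)
    (hb : 3 * (Fintype.card ι + 1) * ((b + 1) ^ Fintype.card ι - 1 : ℝ) <
      4 * Fintype.card ι * ((b + 1) ^ Fintype.card ι - (b + 1) ^ (Fintype.card ι - 1))) :
    ∃ δ : ℝ, 0 < δ ∧
      (fun x : ℝ ↦ (Nat.card (exceptionalPrimes ((∏ i, a i) ^ b) x) : ℝ)) =O[atTop]
        fun x ↦ x ^ (1 - δ) := by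
  set r := (Fintype.card ι : ℝ)
  have hr : 0 < r + 1 := by positivity
  have hpow : (0 : ℝ) ≤ (b + 1) ^ Fintype.card ι - 1 := sub_nonneg.mpr (one_le_pow₀ (by simp))
  set D : ℝ := 4 * r * ((b + 1) ^ Fintype.card ι - (b + 1) ^ (Fintype.card ι - 1))
  have hD : 0 < D := hb.trans_le' (by positivity)
  obtain ⟨θ, hlow, hhigh⟩ : ∃ θ, 3 * ((b + 1) ^ Fintype.card ι - 1) / D < θ ∧ θ < 1 / (r + 1) :=
    exists_between <| by rw [div_lt_div_iff₀ hD hr]; linarith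
  have hθ : 0 ≤ θ := hlow.le.trans' (by positivity)
  rw [div_lt_iff₀ hD] at hlow
  rw [lt_div_iff₀ hr] at hhigh
  refine ⟨1 - θ * (r + 1), sub_pos.mpr hhigh, ?_⟩
  rw [sub_sub_cancel]
  exact ha.card_exceptionalPrimes_isBigO_rpow hθ (by linarith)

end ExceptionalPrimes

/-- **Corollary (Skałba variant).** Let `A = (2·3·5·7·11)^9`. For almost all primes
`p`, there are positive integers `m, n` such that `p` divides
`∏_{a ∣ A, a > 1} (a^m + a^n + 1)`. -/
theorem stmt_5 :
    (fun x : ℝ => (Nat.card {p : ℕ |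
        Nat.Prime p ∧ (p : ℝ) ≤ x ∧
        ¬ ∃ m n : ℕ, 0 < m ∧ 0 < n ∧
            p ∣ ∏ d ∈ ((2 * 3 * 5 * 7 * 11 : ℕ) ^ 9).divisors.filter (fun d => 1 < d),
              (d ^ m + d ^ n + 1)} : ℝ))
      =o[atTop] (fun x : ℝ => x / Real.log x) := by
  have hindep : MulIndependent ![2, 3, 5, 7, 11] :=
    mulIndependent_of_injective_of_prime (by decide) (by decide)
  obtain ⟨δ, hδ, hcount⟩ := stmt_5_general hindep 9 (by norm_num)
  have hprod : ∏ i, ![2, 3, 5, 7, 11] i = 2 * 3 * 5 * 7 * 11 := by decide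
  rw [hprod] at hcount
  exact hcount.trans_isLittleO (rpow_one_sub_isLittleO_div_log hδ)
end
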